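/- Let d, k ≥ 1 be integers and θ ∈ (0,1). There exists a constant C = C(θ, k, d) such that for all x, y ∈ 𝕊^k with x + e₁₁ ∈ 𝕊^k and all t ≥ 0, |p_t^ℓ(x,y) − p_t^ℓ(x + e₁₁, y)| ≤ C (√t + ‖x − y‖ + 1)^{−(kd+θ)}. -/

import Mathlib

open scoped Classical

noncomputable section

namespace SSEPPaper

/-- Configurations of `k` labelled particles on `ℤ^d`. -/
abbrev Conf (d k : ℕ) := Fin k → Fin d → ℤ

/-- Euclidean norm of an integer vector in `ℤ^d`. -/
def vnorm {d : ℕ} (v : Fin d → ℤ) : ℝ := Real.sqrt (∑ j, ((v j : ℝ)) ^ 2)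

/-- Euclidean norm on `(ℝ^d)^k` of an integer configuration. -/
def cnorm {d k : ℕ} (x : Conf d k) : ℝ := Real.sqrt (∑ i, ∑ j, ((x i j : ℝ)) ^ 2)

/-- The set `𝕊^k` of configurations with pairwise distinct particle positions. -/
def SSet (d k : ℕ) : Set (Conf d k) := {x | ∀ i j : Fin k, i ≠ j → x i ≠ x j}

/-- Swap of the coordinates `i` and `j` of a configuration. -/
def cswap {d k : ℕ} (i j : Fin k) (x : Conf d k) : Conf d k := x ∘ Equiv.swap i j

/-- Kronecker delta function at `y`. -/
def deltaFn {α : Type*} (y : α) : α → ℝ := fun x => if x = y then 1 else 0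

/-- Generator of the labelled exclusion process, extended to all of `(ℤ^d)^k`. -/
def Lexc {d k : ℕ} (f : Conf d k → ℝ) : Conf d k → ℝ := fun x =>
  (∑' y : Conf d k, if cnorm (y - x) = 1 ∧ y ∈ SSet d k then f y - f x else 0) +
    ∑ i : Fin k, ∑ j : Fin k,
      if i < j ∧ vnorm (x i - x j) = 1 ∧ x ∈ SSet d k then f (cswap i j x) - f x else 0

/-- Transition probabilities `p_t^ℓ(x,y) = (e^{tL^ℓ} δ_y)(x)` of the labelled exclusion
process, given by the exponential power series of the generator. -/
def ptl {d k : ℕ} (t : ℝ) (x y : Conf d k) : ℝ :=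
  ∑' n : ℕ, t ^ n / n.factorial * ((Lexc (d := d) (k := k))^[n] (deltaFn y)) x

/-- The configuration `e₁₁ = ((1,0,…,0),(0,…,0),…,(0,…,0))`. -/
def e11 (d k : ℕ) : Conf d k := fun i j => if i.val = 0 ∧ j.val = 0 then 1 else 0

/-!
On `𝕊^k` the exclusion dynamics is the stirring process, in which every bond exchanges the contents
of its endpoints at rate one. Liggett's comparison with independent walks bounds the kernel by a
product of heat kernels, hence by a multiple of `(1 + t) ^ (-kd/2)`, and the supersolution
`(√(1 + t) / (64 + ‖x - y‖²)) ^ (kd)` improves this to a multiple of `(1 + t + ‖x - y‖²) ^ (-kd/2)`.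

On a ball of radius `R` comparable to `√t + ‖x - y‖ + 1` the gradient is then bounded by doubling
the variables: at a maximum of `u z - u z'` minus a multiple of `penalty R (z - z')` and a
localizing term, the two configurations are moved so that shared bonds and shared coordinates move
together and all others independently. The penalty is concave away from zero, so the maximum is
impossible unless exclusion keeps two adjacent particles from moving independently. In dimension
`d ≥ 2` a barrier that is logarithmic in the distances between particles rules this out. It costs a
factor of order `log R`, which `θ < 1` absorbs.
-/

section Lattice

/-- A site of the lattice `ℤ^d`. -/
abbrev Site (d : ℕ) := Fin d → ℤ

variable {d : ℕ}

/-- The squared Euclidean norm on `ℤ^d`. -/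
def siteSq (a : Site d) : ℝ := ∑ j, (a j : ℝ) ^ 2

/-- The `m`-th standard unit vector of `ℤ^d`. -/
def unitVec (m : Fin d) : Site d := Pi.single m 1

/-- The nearest-neighbour graph on `ℤ^d`, whose edges are the bonds of the process. -/
def lattice (d : ℕ) : SimpleGraph (Site d) where
  Adj a c := siteSq (a - c) = 1
  symm := ⟨fun a c h => by simpa [siteSq, sub_sq_comm] using h⟩
  loopless := ⟨fun a h => by simp [siteSq] at h⟩

lemma mk_mem_edgeSet {a c : Site d} : s(a, c) ∈ (lattice d).edgeSet ↔ siteSq (a - c) = 1 :=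
  Iff.rfl

lemma siteSq_nonneg (a : Site d) : 0 ≤ siteSq a := Finset.sum_nonneg fun _ _ => sq_nonneg _

lemma siteSq_neg (a : Site d) : siteSq (-a) = siteSq a := by simp [siteSq]

lemma siteSq_sub_comm (a c : Site d) : siteSq (a - c) = siteSq (c - a) := by
  rw [← siteSq_neg, neg_sub]

lemma siteSq_eq_zero {a : Site d} : siteSq a = 0 ↔ a = 0 := by
  simp [siteSq, Finset.sum_eq_zero_iff_of_nonneg, sq_nonneg, funext_iff]

lemma siteSq_eq_natCast (a : Site d) : siteSq a = ((∑ j, (a j).natAbs ^ 2 : ℕ) : ℝ) := by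
  simp [siteSq, Nat.cast_natAbs]

lemma vnorm_eq_one_iff {a : Site d} : vnorm a = 1 ↔ siteSq a = 1 := Real.sqrt_eq_one

lemma siteSq_unitVec (m : Fin d) : siteSq (unitVec m) = 1 := by
  simp [siteSq, unitVec, Pi.single_apply]

lemma exists_eq_one_of_sum_eq_one {ι : Type*} [Fintype ι] {n : ι → ℕ} (h : ∑ i, n i = 1) :
    ∃ i, n i = 1 ∧ ∀ j, j ≠ i → n j = 0 := by
  obtain ⟨i, -, hi⟩ := Finset.exists_ne_zero_of_sum_ne_zero (h.trans_ne one_ne_zero)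
  have hsplit := Finset.add_sum_erase Finset.univ n (Finset.mem_univ i)
  have hrest : ∑ j ∈ Finset.univ.erase i, n j = 0 := by omega
  exact ⟨i, by omega, fun j hj =>
    Finset.sum_eq_zero_iff.1 hrest j (Finset.mem_erase.2 ⟨hj, Finset.mem_univ j⟩)⟩

lemma eq_unitVec_or_eq_neg_of_siteSq_eq_one {a : Site d} (h : siteSq a = 1) :
    ∃ m, a = unitVec m ∨ a = -unitVec m := by
  rw [siteSq_eq_natCast, Nat.cast_eq_one] at h
  obtain ⟨m, hm, hzero⟩ := exists_eq_one_of_sum_eq_one h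
  have eq_single : a = Pi.single m (a m) := by
    funext j
    by_cases hj : j = m
    · subst hj; simp
    · simpa [hj] using hzero j hj
  refine ⟨m, (Int.natAbs_eq_iff.1 (pow_eq_one_iff_left two_ne_zero |>.1 hm)).imp ?_ ?_⟩ <;>
    intro hm <;> rw [eq_single, hm] <;> simp [unitVec, Pi.single_neg]

lemma unitVec_injective : Function.Injective (unitVec (d := d)) := fun m m' h => by
  by_contra hne
  simpa [unitVec, hne] using congrFun h m

lemma unitVec_ne_neg_unitVec (m m' : Fin d) : unitVec m ≠ -unitVec m' := fun h => by
  by_cases hm : m = m'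
  · subst hm
    simpa [unitVec] using congrFun h m
  · simpa [unitVec, hm] using congrFun h m

/-- The bonds of the lattice that contain the site `a`. -/
def bondsAt (a : Site d) : Finset (Sym2 (Site d)) :=
  Finset.univ.image (fun m => s(a, a + unitVec m)) ∪
    Finset.univ.image (fun m => s(a, a - unitVec m))

lemma mem_bondsAt {a : Site d} {b : Sym2 (Site d)} :
    b ∈ bondsAt a ↔ a ∈ b ∧ b ∈ (lattice d).edgeSet := by
  simp only [bondsAt, Finset.mem_union, Finset.mem_image, Finset.mem_univ, true_and]
  constructor
  · rintro (⟨m, rfl⟩ | ⟨m, rfl⟩)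
    · exact ⟨Sym2.mem_mk_left _ _, mk_mem_edgeSet.2 (by simp [siteSq_neg, siteSq_unitVec])⟩
    · exact ⟨Sym2.mem_mk_left _ _, mk_mem_edgeSet.2 (by simp [siteSq_unitVec])⟩
  · rintro ⟨ha, hb⟩
    obtain ⟨c, rfl⟩ := Sym2.mem_iff_exists.1 ha
    rw [mk_mem_edgeSet, siteSq_sub_comm] at hb
    obtain ⟨m, hm | hm⟩ := eq_unitVec_or_eq_neg_of_siteSq_eq_one hb
    · exact Or.inl ⟨m, by rw [← hm, add_sub_cancel]⟩
    · exact Or.inr ⟨m, by rw [sub_eq_add_neg, ← hm, add_sub_cancel]⟩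

lemma sum_bondsAt (F : Sym2 (Site d) → ℝ) (a : Site d) :
    ∑ b ∈ bondsAt a, F b = ∑ m, (F s(a, a + unitVec m) + F s(a, a - unitVec m)) := by
  rw [bondsAt, Finset.sum_union, Finset.sum_image, Finset.sum_image, Finset.sum_add_distrib]
  · exact fun m _ m' _ h => unitVec_injective (sub_right_injective (Sym2.congr_right.1 h))
  · exact fun m _ m' _ h => unitVec_injective (add_right_injective a (Sym2.congr_right.1 h))
  · simp only [Finset.disjoint_left, Finset.mem_image, Finset.mem_univ, true_and]
    rintro b ⟨m, rfl⟩ ⟨m', h⟩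
    rw [Sym2.congr_right, sub_eq_add_neg, add_right_inj] at h
    exact unitVec_ne_neg_unitVec m m' h.symm

lemma card_bondsAt_le (a : Site d) : (bondsAt a).card ≤ 2 * d :=
  calc (bondsAt a).card ≤ _ := Finset.card_union_le _ _
    _ ≤ d + d := add_le_add (Finset.card_image_le.trans_eq (Finset.card_fin d))
        (Finset.card_image_le.trans_eq (Finset.card_fin d))
    _ = 2 * d := (two_mul d).symm

/-- The transposition of the two endpoints of a bond. -/
def bondSwap (b : Sym2 (Site d)) : Equiv.Perm (Site d) :=
  Sym2.lift ⟨Equiv.swap, Equiv.swap_comm⟩ b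

lemma bondSwap_mk (a c : Site d) : bondSwap s(a, c) = Equiv.swap a c := rfl

lemma bondSwap_of_notMem {a : Site d} {b : Sym2 (Site d)} (h : a ∉ b) : bondSwap b a = a := by
  induction b with
  | h p q =>
    rw [Sym2.mem_iff, not_or] at h
    exact Equiv.swap_apply_of_ne_of_ne h.1 h.2

lemma mk_bondSwap {a : Site d} {b : Sym2 (Site d)} (h : a ∈ b) : s(a, bondSwap b a) = b := by
  obtain ⟨c, rfl⟩ := Sym2.mem_iff_exists.1 h
  rw [bondSwap_mk, Equiv.swap_apply_left]

lemma siteSq_bondSwap_sub {a : Site d} {b : Sym2 (Site d)} (h : b ∈ bondsAt a) :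
    siteSq (bondSwap b a - a) = 1 := by
  obtain ⟨ha, hb⟩ := mem_bondsAt.1 h
  rwa [← mk_bondSwap ha, mk_mem_edgeSet, siteSq_sub_comm] at hb

/-- The discrete Laplacian on `ℤ^d`. -/
def lap (g : Site d → ℝ) (a : Site d) : ℝ :=
  ∑ m, (g (a + unitVec m) + g (a - unitVec m) - 2 * g a)

lemma sum_bondSwap_sub (g : Site d → ℝ) {a : Site d} {E : Finset (Sym2 (Site d))}
    (hsub : bondsAt a ⊆ E) (hE : ∀ b ∈ E, b ∈ (lattice d).edgeSet) :
    ∑ b ∈ E, (g (bondSwap b a) - g a) = lap g a := by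
  rw [← Finset.sum_subset hsub, sum_bondsAt]
  · refine Finset.sum_congr rfl fun m _ => ?_
    simp only [bondSwap_mk, Equiv.swap_apply_left]
    ring
  · intro b hb hba
    rw [bondSwap_of_notMem fun h => hba (mem_bondsAt.2 ⟨h, hE b hb⟩), sub_self]

end Lattice

section Stirring

variable {d k : ℕ}

/-- The squared Euclidean norm of a configuration. -/
def confSq (x : Conf d k) : ℝ := ∑ i, siteSq (x i)

lemma confSq_nonneg (x : Conf d k) : 0 ≤ confSq x := Finset.sum_nonneg fun _ _ => siteSq_nonneg _

lemma confSq_zero : confSq (0 : Conf d k) = 0 := by simp [confSq, siteSq]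

lemma cnorm_eq_sqrt_confSq (x : Conf d k) : cnorm x = √(confSq x) := rfl

lemma cnorm_eq_one_iff {x : Conf d k} : cnorm x = 1 ↔ confSq x = 1 := Real.sqrt_eq_one

lemma mem_SSet_iff_injective {x : Conf d k} : x ∈ SSet d k ↔ Function.Injective x :=
  ⟨fun h i j hij => by_contra fun hne => h i j hne hij, fun h _ _ hne => h.ne hne⟩

lemma exists_eq_update_of_confSq_sub_eq_one {x y : Conf d k} (h : confSq (y - x) = 1) :
    ∃ i, y = Function.update x i (y i) ∧ siteSq (x i - y i) = 1 := by
  simp only [confSq, siteSq_eq_natCast] at h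
  norm_cast at h
  obtain ⟨i, hi, hzero⟩ := exists_eq_one_of_sum_eq_one h
  refine ⟨i, Function.eq_update_iff.2 ⟨rfl, fun j hj => ?_⟩, ?_⟩
  · have : siteSq ((y - x) j) = 0 := by rw [siteSq_eq_natCast, hzero j hj, Nat.cast_zero]
    exact sub_eq_zero.1 (siteSq_eq_zero.1 this)
  · rw [siteSq_sub_comm, ← Pi.sub_apply, siteSq_eq_natCast, hi, Nat.cast_one]

lemma confSq_update_sub (x : Conf d k) (i : Fin k) (c : Site d) :
    confSq (Function.update x i c - x) = siteSq (c - x i) := by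
  rw [confSq, Finset.sum_eq_single i]
  · simp
  · intro j _ hj
    simp [hj, siteSq_eq_zero]
  · simp

/-- The stirring move along the bond `b`: every particle sitting at an endpoint of `b` is carried
to the other endpoint. -/
def stir (b : Sym2 (Site d)) (x : Conf d k) : Conf d k := fun i => bondSwap b (x i)

lemma stir_mem_SSet (b : Sym2 (Site d)) {x : Conf d k} (hx : x ∈ SSet d k) :
    stir b x ∈ SSet d k := fun i j hij h => hx i j hij ((bondSwap b).injective h)

/-- The bonds of the lattice with at least one endpoint occupied in the configuration `x`. -/
def bondsOf (x : Conf d k) : Finset (Sym2 (Site d)) :=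
  Finset.univ.biUnion fun i => bondsAt (x i)

lemma mem_bondsOf {x : Conf d k} {b : Sym2 (Site d)} :
    b ∈ bondsOf x ↔ (∃ i, x i ∈ b) ∧ b ∈ (lattice d).edgeSet := by
  simp [bondsOf, mem_bondsAt]

lemma bondsAt_subset_bondsOf (x : Conf d k) (i : Fin k) : bondsAt (x i) ⊆ bondsOf x :=
  Finset.subset_biUnion_of_mem (fun i => bondsAt (x i)) (Finset.mem_univ i)

lemma edgeSet_of_mem_bondsOf {x : Conf d k} : ∀ b ∈ bondsOf x, b ∈ (lattice d).edgeSet :=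
  fun _ hb => (mem_bondsOf.1 hb).2

lemma card_bondsOf_le (x : Conf d k) : (bondsOf x).card ≤ k * (2 * d) := by
  simpa [bondsOf] using
    Finset.card_biUnion_le_card_mul Finset.univ _ (2 * d) fun i _ => card_bondsAt_le (x i)

lemma stir_of_forall_notMem {x : Conf d k} {b : Sym2 (Site d)} (h : ∀ i, x i ∉ b) :
    stir b x = x := funext fun i => bondSwap_of_notMem (h i)

lemma stir_mk_of_notMem_range {x : Conf d k} (hx : x ∈ SSet d k) (i : Fin k) {c : Site d}
    (hc : c ∉ Set.range x) : stir s(x i, c) x = Function.update x i c := by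
  refine Function.eq_update_iff.2 ⟨by simp [stir, bondSwap_mk], fun j hj => ?_⟩
  refine bondSwap_of_notMem fun h => ?_
  rcases Sym2.mem_iff.1 h with h | h
  · exact hj (mem_SSet_iff_injective.1 hx h)
  · exact hc ⟨j, h⟩

lemma stir_mk_apply_apply {x : Conf d k} (hx : x ∈ SSet d k) (i j : Fin k) :
    stir s(x i, x j) x = cswap i j x :=
  (mem_SSet_iff_injective.1 hx).swap_comp i j

/-- The generator of the stirring process: every bond independently exchanges the contents of its
endpoints at rate one. -/
def stirGen : (Conf d k → ℝ) →ₗ[ℝ] (Conf d k → ℝ) where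
  toFun f x := ∑ b ∈ bondsOf x, (f (stir b x) - f x)
  map_add' f g := by
    ext x
    simp only [Pi.add_apply, ← Finset.sum_add_distrib]
    exact Finset.sum_congr rfl fun b _ => by ring
  map_smul' c f := by
    ext x
    simp only [Pi.smul_apply, smul_eq_mul, Finset.mul_sum, mul_sub, RingHom.id_apply]

lemma stirGen_apply (f : Conf d k → ℝ) (x : Conf d k) :
    stirGen f x = ∑ b ∈ bondsOf x, (f (stir b x) - f x) := rfl

lemma stirGen_eq_sum (f : Conf d k → ℝ) {x : Conf d k} {E : Finset (Sym2 (Site d))}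
    (hsub : bondsOf x ⊆ E) (hE : ∀ b ∈ E, b ∈ (lattice d).edgeSet) :
    stirGen f x = ∑ b ∈ E, (f (stir b x) - f x) := by
  refine Finset.sum_subset hsub fun b hb hbx => ?_
  rw [stir_of_forall_notMem fun i hi => hbx (mem_bondsOf.2 ⟨⟨i, hi⟩, hE b hb⟩), sub_self]

lemma jump_iff_exists_update {x y : Conf d k} (hx : x ∈ SSet d k) :
    cnorm (y - x) = 1 ∧ y ∈ SSet d k ↔
      ∃ i, ∃ c ∉ Set.range x, siteSq (x i - c) = 1 ∧ y = Function.update x i c := by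
  rw [cnorm_eq_one_iff, mem_SSet_iff_injective]
  constructor
  · rintro ⟨h, hy⟩
    obtain ⟨i, hupd, hi⟩ := exists_eq_update_of_confSq_sub_eq_one h
    refine ⟨i, y i, ?_, hi, hupd⟩
    rintro ⟨j, hj⟩
    by_cases hji : j = i
    · subst hji
      simp [hj, siteSq] at hi
    · have : y j = x j := (Function.eq_update_iff.1 hupd).2 j hji
      exact hji (hy (this.trans hj))
  · rintro ⟨i, c, hc, hi, rfl⟩
    refine ⟨by rw [confSq_update_sub, siteSq_sub_comm, hi], ?_⟩
    rw [← stir_mk_of_notMem_range hx i hc, ← mem_SSet_iff_injective]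
    exact stir_mem_SSet _ hx

lemma tsum_jumps_eq_sum (f : Conf d k → ℝ) {x : Conf d k} (hx : x ∈ SSet d k) :
    (∑' y : Conf d k, if cnorm (y - x) = 1 ∧ y ∈ SSet d k then f y - f x else 0) =
      ∑ b ∈ bondsOf x with ∃ c ∈ b, c ∉ Set.range x, (f (stir b x) - f x) := by
  set E := {b ∈ bondsOf x | ∃ c ∈ b, c ∉ Set.range x}
  have mem_E {b} (hb : b ∈ E) : ∃ i, ∃ c ∉ Set.range x, b = s(x i, c) ∧ siteSq (x i - c) = 1 := by
    obtain ⟨hbx, c, hcb, hc⟩ := Finset.mem_filter.1 hb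
    obtain ⟨⟨i, hi⟩, hbond⟩ := mem_bondsOf.1 hbx
    obtain rfl := (Sym2.mem_and_mem_iff fun h => hc ⟨i, h⟩).1 ⟨hi, hcb⟩
    exact ⟨i, c, hc, rfl, hbond⟩
  have inj : Set.InjOn (fun b => stir b x) (E : Set (Sym2 (Site d))) := by
    intro b hb b' hb' h
    obtain ⟨i, c, hc, rfl, -⟩ := mem_E hb
    obtain ⟨i', c', hc', rfl, -⟩ := mem_E hb'
    simp only [stir_mk_of_notMem_range hx _ hc, stir_mk_of_notMem_range hx _ hc'] at h
    have hi := congrFun h i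
    rw [Function.update_self] at hi
    by_cases hii : i = i'
    · subst hii
      rw [hi, Function.update_self]
    · rw [Function.update_of_ne hii] at hi
      exact absurd ⟨i, hi.symm⟩ hc
  rw [tsum_eq_sum (s := E.image fun b => stir b x), Finset.sum_image inj]
  · refine Finset.sum_congr rfl fun b hb => if_pos ?_
    obtain ⟨i, c, hc, rfl, hi⟩ := mem_E hb
    exact (jump_iff_exists_update hx).2 ⟨i, c, hc, hi, stir_mk_of_notMem_range hx i hc⟩
  · refine fun y hy => if_neg fun hjump => hy ?_
    obtain ⟨i, c, hc, hi, rfl⟩ := (jump_iff_exists_update hx).1 hjump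
    refine Finset.mem_image.2 ⟨s(x i, c), ?_, stir_mk_of_notMem_range hx i hc⟩
    exact Finset.mem_filter.2
      ⟨mem_bondsOf.2 ⟨⟨i, Sym2.mem_mk_left _ _⟩, hi⟩, c, Sym2.mem_mk_right _ _, hc⟩

lemma sum_swaps_eq_sum (f : Conf d k → ℝ) {x : Conf d k} (hx : x ∈ SSet d k) :
    (∑ i : Fin k, ∑ j : Fin k,
      if i < j ∧ vnorm (x i - x j) = 1 ∧ x ∈ SSet d k then f (cswap i j x) - f x else 0) =
      ∑ b ∈ bondsOf x with ¬∃ c ∈ b, c ∉ Set.range x, (f (stir b x) - f x) := by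
  have hinj := mem_SSet_iff_injective.1 hx
  simp only [hx, and_true, vnorm_eq_one_iff]
  rw [← Finset.sum_product', ← Finset.sum_filter]
  refine Finset.sum_nbij (fun p => s(x p.1, x p.2)) ?_ ?_ ?_ ?_
  · intro p hp
    obtain ⟨-, -, hadj⟩ := Finset.mem_filter.1 hp
    refine Finset.mem_filter.2 ⟨mem_bondsOf.2 ⟨⟨p.1, Sym2.mem_mk_left _ _⟩, hadj⟩, ?_⟩
    push Not
    exact Sym2.ball.2 ⟨⟨p.1, rfl⟩, ⟨p.2, rfl⟩⟩
  · rintro ⟨i, j⟩ hp ⟨i', j'⟩ hp' h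
    have hlt := (Finset.mem_filter.1 hp).2.1
    have hlt' := (Finset.mem_filter.1 hp').2.1
    rcases Sym2.eq_iff.1 h with ⟨h₁, h₂⟩ | ⟨h₁, h₂⟩
    · exact Prod.ext (hinj h₁) (hinj h₂)
    · rw [hinj h₁, hinj h₂] at hlt
      exact absurd hlt hlt'.asymm
  · intro b hb
    obtain ⟨hbx, hrange⟩ := Finset.mem_filter.1 hb
    push Not at hrange
    have hbond := (mem_bondsOf.1 hbx).2
    induction b with
    | h a c =>
      obtain ⟨⟨i, rfl⟩, ⟨j, rfl⟩⟩ := Sym2.ball.1 hrange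
      have hne : i ≠ j := fun h => (lattice d).not_isDiag_of_mem_edgeSet hbond (by simp [h])
      rcases hne.lt_or_gt with hij | hij
      · exact ⟨(i, j), by simpa [hij] using mk_mem_edgeSet.1 hbond, rfl⟩
      · exact ⟨(j, i), by simpa [hij, siteSq_sub_comm] using mk_mem_edgeSet.1 hbond, Sym2.eq_swap⟩
  · exact fun p _ => by rw [stir_mk_apply_apply hx]

/-- Adjacent particles may be swapped by the process, so on `𝕊^k` the exclusion dynamics is exactly
the stirring dynamics. -/
lemma Lexc_eq_stirGen (f : Conf d k → ℝ) {x : Conf d k} (hx : x ∈ SSet d k) :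
    Lexc f x = stirGen f x := by
  rw [Lexc, tsum_jumps_eq_sum f hx, sum_swaps_eq_sum f hx,
    Finset.sum_filter_add_sum_filter_not, stirGen_apply]

end Stirring

section ExponentialSeries

variable {a : ℕ → ℝ} {Λ : ℝ}

lemma norm_pow_div_factorial_mul_le (ha : ∀ n, |a n| ≤ Λ ^ n) (t : ℝ) (n : ℕ) :
    ‖t ^ n / n.factorial * a n‖ ≤ (|t| * Λ) ^ n / n.factorial := by
  rw [Real.norm_eq_abs, abs_mul, abs_div, abs_pow, Nat.abs_cast, mul_pow, mul_div_right_comm]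
  gcongr
  exact ha n

lemma summable_pow_div_factorial_mul (ha : ∀ n, |a n| ≤ Λ ^ n) (t : ℝ) :
    Summable fun n : ℕ => t ^ n / n.factorial * a n :=
  .of_norm_bounded (Real.summable_pow_div_factorial (|t| * Λ))
    (norm_pow_div_factorial_mul_le ha t)

lemma abs_tsum_pow_div_factorial_mul_le (ha : ∀ n, |a n| ≤ Λ ^ n) (t : ℝ) :
    |∑' n : ℕ, t ^ n / n.factorial * a n| ≤ Real.exp (|t| * Λ) := by
  rw [Real.exp_eq_exp_ℝ, NormedSpace.exp_eq_tsum_div]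
  exact tsum_of_norm_bounded (Real.summable_pow_div_factorial (|t| * Λ)).hasSum
    (norm_pow_div_factorial_mul_le ha t)

lemma hasDerivAt_pow_succ_div_factorial (n : ℕ) (t : ℝ) :
    HasDerivAt (fun s : ℝ => s ^ (n + 1) / (n + 1).factorial) (t ^ n / n.factorial) t := by
  refine ((hasDerivAt_pow (n + 1) t).div_const _).congr_deriv ?_
  rw [Nat.add_sub_cancel, Nat.factorial_succ, Nat.cast_mul]
  exact mul_div_mul_left _ _ (Nat.cast_ne_zero.2 n.succ_ne_zero)

lemma hasDerivAt_tsum_pow_div_factorial_mul (ha : ∀ n, |a n| ≤ Λ ^ n) (t : ℝ) :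
    HasDerivAt (fun s : ℝ => ∑' n : ℕ, s ^ n / n.factorial * a n)
      (∑' n : ℕ, t ^ n / n.factorial * a (n + 1)) t := by
  have split_zero : (fun s : ℝ => ∑' n : ℕ, s ^ n / n.factorial * a n) =
      fun s => a 0 + ∑' n : ℕ, s ^ (n + 1) / (n + 1).factorial * a (n + 1) := by
    funext s
    rw [(summable_pow_div_factorial_mul ha s).tsum_eq_zero_add]
    simp
  have deriv_bound (n : ℕ) (s : ℝ) (hs : s ∈ Metric.ball (0 : ℝ) (|t| + 1)) :
      ‖s ^ n / n.factorial * a (n + 1)‖ ≤ ((|t| + 1) * Λ) ^ n / n.factorial * Λ := by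
    rw [mem_ball_zero_iff, Real.norm_eq_abs] at hs
    calc ‖s ^ n / n.factorial * a (n + 1)‖ = |s| ^ n / n.factorial * |a (n + 1)| := by
          rw [Real.norm_eq_abs, abs_mul, abs_div, abs_pow, Nat.abs_cast]
      _ ≤ (|t| + 1) ^ n / n.factorial * Λ ^ (n + 1) := by
          gcongr
          exact ha _
      _ = ((|t| + 1) * Λ) ^ n / n.factorial * Λ := by rw [mul_pow, pow_succ]; ring
  rw [split_zero]
  refine HasDerivAt.const_add _ ?_
  exact hasDerivAt_tsum_of_isPreconnected (y₀ := 0)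
    ((Real.summable_pow_div_factorial _).mul_right Λ) Metric.isOpen_ball
    (convex_ball (0 : ℝ) (|t| + 1)).isPreconnected
    (fun n s _ => (hasDerivAt_pow_succ_div_factorial n s).mul_const _) deriv_bound
    (Metric.mem_ball_self (by positivity))
    ((summable_nat_add_iff 1).2 (summable_pow_div_factorial_mul ha 0)) (by simp)

end ExponentialSeries

section Semigroup

variable {d k : ℕ}

lemma abs_stirGen_le {f : Conf d k → ℝ} {A : ℝ} (hf : ∀ z ∈ SSet d k, |f z| ≤ A)
    {x : Conf d k} (hx : x ∈ SSet d k) : |stirGen f x| ≤ 4 * k * d * A := by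
  have hA : 0 ≤ A := (abs_nonneg _).trans (hf x hx)
  calc |stirGen f x| ≤ ∑ b ∈ bondsOf x, |f (stir b x) - f x| := Finset.abs_sum_le_sum_abs _ _
    _ ≤ ∑ _b ∈ bondsOf x, (A + A) := Finset.sum_le_sum fun b _ =>
        (abs_sub _ _).trans (add_le_add (hf _ (stir_mem_SSet b hx)) (hf x hx))
    _ = (bondsOf x).card * (A + A) := by rw [Finset.sum_const, nsmul_eq_mul]
    _ ≤ (k * (2 * d) : ℕ) * (A + A) := by
        gcongr
        exact card_bondsOf_le x
    _ = 4 * k * d * A := by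
        push_cast
        ring

lemma abs_iterate_Lexc_deltaFn_le (y : Conf d k) {x : Conf d k} (hx : x ∈ SSet d k) (n : ℕ) :
    |(Lexc^[n] (deltaFn y)) x| ≤ (4 * k * d : ℝ) ^ n := by
  induction n generalizing x with
  | zero => by_cases h : x = y <;> simp [deltaFn, h]
  | succ n ih =>
    rw [Function.iterate_succ_apply', Lexc_eq_stirGen _ hx, pow_succ']
    exact abs_stirGen_le (fun _ hz => ih hz) hx

lemma abs_ptl_le_exp {x : Conf d k} (hx : x ∈ SSet d k) (y : Conf d k) (t : ℝ) :
    |ptl t x y| ≤ Real.exp (|t| * (4 * k * d)) :=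
  abs_tsum_pow_div_factorial_mul_le (abs_iterate_Lexc_deltaFn_le y hx) t

lemma ptl_zero (x y : Conf d k) : ptl 0 x y = deltaFn y x := by
  rw [ptl, tsum_eq_single 0 fun n hn => by simp [hn]]
  simp

lemma hasDerivAt_ptl {x : Conf d k} (hx : x ∈ SSet d k) (y : Conf d k) (t : ℝ) :
    HasDerivAt (fun s => ptl s x y) (stirGen (fun z => ptl t z y) x) t := by
  have hsum (z : Conf d k) (hz : z ∈ SSet d k) :=
    summable_pow_div_factorial_mul (abs_iterate_Lexc_deltaFn_le y hz) t
  refine (hasDerivAt_tsum_pow_div_factorial_mul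
    (abs_iterate_Lexc_deltaFn_le y hx) t).congr_deriv ?_
  calc ∑' n : ℕ, t ^ n / n.factorial * (Lexc^[n + 1] (deltaFn y)) x
      = ∑' n : ℕ, ∑ b ∈ bondsOf x, (t ^ n / n.factorial * (Lexc^[n] (deltaFn y)) (stir b x) -
          t ^ n / n.factorial * (Lexc^[n] (deltaFn y)) x) := by
        refine tsum_congr fun n => ?_
        rw [Function.iterate_succ_apply', Lexc_eq_stirGen _ hx, stirGen_apply, Finset.mul_sum]
        exact Finset.sum_congr rfl fun b _ => mul_sub _ _ _
    _ = ∑ b ∈ bondsOf x, (ptl t (stir b x) y - ptl t x y) := by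
        rw [Summable.tsum_finsetSum fun b _ => (hsum _ (stir_mem_SSet b hx)).sub (hsum x hx)]
        exact Finset.sum_congr rfl fun b _ => (hsum _ (stir_mem_SSet b hx)).tsum_sub (hsum x hx)

end Semigroup

section MaximumPrinciple

lemma hasDerivAt_nonneg_of_forall_le_left {f : ℝ → ℝ} {f' s₀ s : ℝ} (hf : HasDerivAt f f' s)
    (hs : s₀ < s) (hmax : ∀ t ∈ Set.Ioo s₀ s, f t ≤ f s) : 0 ≤ f' := by
  have hslope := (hasDerivWithinAt_iff_tendsto_slope' (by simp)).1
    (hf.hasDerivWithinAt (s := Set.Iio s))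
  refine ge_of_tendsto hslope ?_
  filter_upwards [Ioo_mem_nhdsLT hs] with t ht
  rw [slope_def_field]
  exact div_nonneg_of_nonpos (sub_nonpos.2 (hmax t ht)) (sub_nonpos.2 ht.2.le)

lemma nonpos_of_deriv_neg_at_pos_max {Ω : Type*} {F : Finset Ω} {f f' : ℝ → Ω → ℝ} {t₁ T : ℝ}
    (hderiv : ∀ x ∈ F, ∀ t ∈ Set.Icc t₁ T, HasDerivAt (fun s => f s x) (f' t x) t)
    (hinit : ∀ x ∈ F, f t₁ x ≤ 0)
    (hmax : ∀ x ∈ F, ∀ t ∈ Set.Ioc t₁ T, 0 < f t x → (∀ z ∈ F, f t z ≤ f t x) → f' t x < 0) :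
    ∀ x ∈ F, ∀ t ∈ Set.Icc t₁ T, f t x ≤ 0 := by
  intro x₀ hx₀ t₀ ht₀
  by_contra! hpos
  have exists_max_time : ∀ x ∈ F, ∃ s ∈ Set.Icc t₁ T, ∀ t ∈ Set.Icc t₁ T, f t x ≤ f s x :=
    fun x hx => isCompact_Icc.exists_isMaxOn ⟨t₀, ht₀⟩
      (f := fun s => f s x) fun t ht => (hderiv x hx t ht).continuousAt.continuousWithinAt
  choose! σ hσ hσmax using exists_max_time
  obtain ⟨x, hx, hxmax⟩ := F.exists_max_image (fun x => f (σ x) x) ⟨x₀, hx₀⟩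
  have hval : 0 < f (σ x) x := hpos.trans_le ((hσmax x₀ hx₀ t₀ ht₀).trans (hxmax x₀ hx₀))
  have hlt : t₁ < σ x := by
    refine (hσ x hx).1.lt_of_ne fun he => ?_
    rw [← he] at hval
    exact hval.not_ge (hinit x hx)
  have hneg := hmax x hx (σ x) ⟨hlt, (hσ x hx).2⟩ hval
    fun z hz => (hσmax z hz _ (hσ x hx)).trans (hxmax z hz)
  exact hneg.not_ge <| hasDerivAt_nonneg_of_forall_le_left (hderiv x hx _ (hσ x hx)) hlt
    fun t ht => hσmax x hx t ⟨ht.1.le, ht.2.le.trans (hσ x hx).2⟩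

variable {d k : ℕ}

lemma stirGen_const (c : ℝ) (x : Conf d k) : stirGen (fun _ => c) x = 0 := by
  simp [stirGen_apply]

lemma stirGen_sum_site (g : Fin k → Site d → ℝ) (x : Conf d k) :
    stirGen (fun z => ∑ i, g i (z i)) x = ∑ i, lap (g i) (x i) := by
  simp only [stirGen_apply, ← Finset.sum_sub_distrib]
  rw [Finset.sum_comm]
  exact Finset.sum_congr rfl fun i _ =>
    sum_bondSwap_sub (g i) (bondsAt_subset_bondsOf x i) edgeSet_of_mem_bondsOf

lemma lap_sum_coord (g : Fin d → ℤ → ℝ) (a : Site d) :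
    lap (fun a => ∑ m, g m (a m)) a = ∑ m, (g m (a m + 1) + g m (a m - 1) - 2 * g m (a m)) := by
  refine Finset.sum_congr rfl fun m _ => ?_
  have shift (s : ℤ) :
      (∑ l, g l ((a + s • unitVec m) l)) - ∑ l, g l (a l) = g m (a m + s) - g m (a m) := by
    rw [← Finset.sum_sub_distrib, Finset.sum_eq_single m]
    · simp [unitVec]
    · intro l _ hl
      simp [unitVec, hl]
    · simp
  have up := shift 1
  have down := shift (-1)
  simp only [one_smul, neg_smul, ← sub_eq_add_neg] at up down
  linarith

lemma lap_siteSq_sub (c a : Site d) : lap (fun a => siteSq (a - c)) a = 2 * d := by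
  calc lap (fun a => siteSq (a - c)) a
      = ∑ m, ((((a m + 1 : ℤ) : ℝ) - c m) ^ 2 + (((a m - 1 : ℤ) : ℝ) - c m) ^ 2
          - 2 * ((a m : ℝ) - c m) ^ 2) := by
        rw [← lap_sum_coord fun m v => ((v : ℝ) - c m) ^ 2]
        simp [siteSq]
    _ = ∑ _m : Fin d, 2 := Finset.sum_congr rfl fun m _ => by push_cast; ring
    _ = 2 * d := by simp [mul_comm]

lemma stirGen_confSq_sub (c x : Conf d k) : stirGen (fun z => confSq (z - c)) x = 2 * k * d := by
  refine (stirGen_sum_site (fun i a => siteSq (a - c i)) x).trans ?_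
  simp only [lap_siteSq_sub]
  simp
  ring

lemma siteSq_le_confSq (x : Conf d k) (i : Fin k) : siteSq (x i) ≤ confSq x :=
  Finset.single_le_sum (f := fun i => siteSq (x i)) (fun _ _ => siteSq_nonneg _)
    (Finset.mem_univ i)

lemma sq_le_siteSq (a : Site d) (j : Fin d) : (a j : ℝ) ^ 2 ≤ siteSq a :=
  Finset.single_le_sum (f := fun j => (a j : ℝ) ^ 2) (fun _ _ => sq_nonneg _) (Finset.mem_univ j)

lemma finite_setOf_confSq_sub_le (c : Conf d k) (K : ℝ) :
    {z : Conf d k | confSq (z - c) ≤ K}.Finite := by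
  suffices h : {z : Conf d k | confSq z ≤ K}.Finite from
    h.preimage (f := fun z => z - c) (sub_left_injective).injOn
  obtain ⟨N, hN⟩ := exists_nat_ge K
  refine (Set.finite_Icc (fun _ _ => -(N : ℤ)) fun _ _ => (N : ℤ)).subset fun z hz => ?_
  have coord_le (i : Fin k) (j : Fin d) : |z i j| ≤ N := by
    have : ((z i j : ℝ)) ^ 2 ≤ N :=
      ((sq_le_siteSq (z i) j).trans (siteSq_le_confSq z i)).trans (le_trans hz hN)
    exact Int.natAbs_le_self_sq (z i j) |>.trans' (Int.abs_eq_natAbs _).le |>.trans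
      (by exact_mod_cast this)
  exact ⟨fun i j => (abs_le.1 (coord_le i j)).1, fun i j => (abs_le.1 (coord_le i j)).2⟩

lemma le_of_forall_pos_le_mul {r Q : ℝ} (hQ : 0 ≤ Q) (h : ∀ ε > 0, r ≤ ε * Q) : r ≤ 0 := by
  refine le_of_forall_pos_le_add fun δ hδ => ?_
  calc r ≤ δ / (Q + 1) * Q := h _ (by positivity)
    _ ≤ 0 + δ := by
      rw [zero_add, div_mul_eq_mul_div, div_le_iff₀ (by positivity)]
      gcongr
      linarith

lemma nonpos_of_strict_subsolution {w w' : ℝ → Conf d k → ℝ} {T : ℝ} {F : Finset (Conf d k)}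
    (hF : ∀ z ∈ F, z ∈ SSet d k)
    (hderiv : ∀ z ∈ F, ∀ t ∈ Set.Icc 0 T, HasDerivAt (fun s => w s z) (w' t z) t)
    (hinit : ∀ z ∈ F, w 0 z ≤ 0)
    (houtside : ∀ z ∈ SSet d k, z ∉ F → ∀ t ∈ Set.Icc 0 T, w t z ≤ 0)
    (hsub : ∀ z ∈ F, ∀ t ∈ Set.Icc 0 T, 0 < w t z → w' t z < stirGen (w t) z) :
    ∀ z ∈ F, ∀ t ∈ Set.Icc 0 T, w t z ≤ 0 := by
  refine nonpos_of_deriv_neg_at_pos_max hderiv hinit fun z hz t ht hpos hmax => ?_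
  have ht' : t ∈ Set.Icc 0 T := Set.Ioc_subset_Icc_self ht
  refine (hsub z hz t ht' hpos).trans_le (Finset.sum_nonpos fun b _ => sub_nonpos.2 ?_)
  by_cases hb : stir b z ∈ F
  · exact hmax _ hb
  · exact (houtside _ (stir_mem_SSet b (hF z hz)) hb t ht').trans hpos.le

lemma stirGen_sub_confSq_growth (f : Conf d k → ℝ) (c z : Conf d k) (ε r : ℝ) :
    stirGen (fun z => f z - ε * (confSq (z - c) + r)) z = stirGen f z - ε * (2 * k * d) := by
  have : (fun z => f z - ε * (confSq (z - c) + r)) =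
      f - ε • ((fun z => confSq (z - c)) + fun _ => r) := rfl
  rw [this, map_sub, map_smul, map_add]
  simp [stirGen_confSq_sub, stirGen_const]

/-- The growth of `confSq` confines the positive maximum of a bounded function to a finite set. -/
lemma le_mul_of_subsolution {v v' : ℝ → Conf d k → ℝ} {T B ε : ℝ} (hε : 0 < ε)
    (hderiv : ∀ x ∈ SSet d k, ∀ t ∈ Set.Icc 0 T, HasDerivAt (fun s => v s x) (v' t x) t)
    (hbdd : ∀ x ∈ SSet d k, ∀ t ∈ Set.Icc 0 T, v t x ≤ B)
    (hinit : ∀ x ∈ SSet d k, v 0 x ≤ 0)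
    (hsub : ∀ x ∈ SSet d k, ∀ t ∈ Set.Icc 0 T, 0 < v t x → v' t x ≤ stirGen (v t) x)
    {x : Conf d k} (hx : x ∈ SSet d k) {t : ℝ} (ht : t ∈ Set.Icc 0 T) :
    v t x ≤ ε * ((2 * k * d + 1) * t) := by
  let w (t : ℝ) (z : Conf d k) := v t z - ε * (confSq (z - x) + (2 * k * d + 1) * t)
  have growth_nonneg (z : Conf d k) {t : ℝ} (ht : 0 ≤ t) :
      0 ≤ ε * (confSq (z - x) + (2 * k * d + 1) * t) :=
    mul_nonneg hε.le (add_nonneg (confSq_nonneg _) (by positivity))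
  set K := max (B / ε) 0
  set F := {z ∈ (finite_setOf_confSq_sub_le x K).toFinset | z ∈ SSet d k} with hF
  have mem_F (z : Conf d k) : z ∈ F ↔ confSq (z - x) ≤ K ∧ z ∈ SSet d k := by simp [hF]
  have hxF : x ∈ F := (mem_F x).2 ⟨by simp [confSq, siteSq, K], hx⟩
  have hwx : w t x ≤ 0 := by
    refine nonpos_of_strict_subsolution (w' := fun t z => v' t z - ε * (2 * k * d + 1))
      (fun z hz => ((mem_F z).1 hz).2) (fun z hz t ht => ?_) (fun z hz => ?_)
      (fun z hz hzF t ht => ?_) (fun z hz t ht hpos => ?_) x hxF t ht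
    · refine (hderiv z ((mem_F z).1 hz).2 t ht).sub (HasDerivAt.const_mul ε ?_)
      simpa using ((hasDerivAt_id t).const_mul (2 * k * d + 1 : ℝ)).const_add (confSq (z - x))
    · exact (sub_le_self _ (growth_nonneg z le_rfl)).trans (hinit z ((mem_F z).1 hz).2)
    · have hK : K < confSq (z - x) := not_le.1 fun h => hzF ((mem_F z).2 ⟨h, hz⟩)
      have hB : B ≤ ε * confSq (z - x) := (div_le_iff₀' hε).1 ((le_max_left _ _).trans hK.le)
      have htime : 0 ≤ ε * ((2 * k * d + 1) * t) := by have := ht.1; positivity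
      linarith [hbdd z hz t ht]
    · have := hsub z ((mem_F z).1 hz).2 t ht (hpos.trans_le (sub_le_self _ (growth_nonneg z ht.1)))
      have hgen : stirGen (w t) z = _ := stirGen_sub_confSq_growth (v t) x z ε _
      linarith
  simpa [w, confSq, siteSq] using hwx

lemma nonpos_of_subsolution {v v' : ℝ → Conf d k → ℝ} {T B : ℝ}
    (hderiv : ∀ x ∈ SSet d k, ∀ t ∈ Set.Icc 0 T, HasDerivAt (fun s => v s x) (v' t x) t)
    (hbdd : ∀ x ∈ SSet d k, ∀ t ∈ Set.Icc 0 T, v t x ≤ B)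
    (hinit : ∀ x ∈ SSet d k, v 0 x ≤ 0)
    (hsub : ∀ x ∈ SSet d k, ∀ t ∈ Set.Icc 0 T, 0 < v t x → v' t x ≤ stirGen (v t) x)
    {x : Conf d k} (hx : x ∈ SSet d k) {t : ℝ} (ht : t ∈ Set.Icc 0 T) : v t x ≤ 0 :=
  le_of_forall_pos_le_mul (mul_nonneg (by positivity) ht.1) fun _ hε =>
    le_mul_of_subsolution hε hderiv hbdd hinit hsub hx ht

lemma abs_ptl_le_exp_of_le {x : Conf d k} (hx : x ∈ SSet d k) (y : Conf d k) {s t : ℝ}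
    (hs : s ∈ Set.Icc 0 t) : |ptl s x y| ≤ Real.exp (t * (4 * k * d)) := by
  refine (abs_ptl_le_exp hx y s).trans (Real.exp_le_exp.2 ?_)
  rw [abs_of_nonneg hs.1]
  exact mul_le_mul_of_nonneg_right hs.2 (by positivity)

lemma ptl_nonneg {x : Conf d k} (hx : x ∈ SSet d k) (y : Conf d k) {t : ℝ} (ht : 0 ≤ t) :
    0 ≤ ptl t x y := by
  rw [← neg_nonpos]
  refine nonpos_of_subsolution (v := fun s z => -ptl s z y) (B := Real.exp (t * (4 * k * d)))
    (fun z hz s _ => (hasDerivAt_ptl hz y s).neg)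
    (fun z hz s hs => (neg_le_abs _).trans (abs_ptl_le_exp_of_le hz y hs)) (fun z _ => ?_)
    (fun z _ s _ _ => (congrFun (map_neg stirGen fun z => ptl s z y) z).ge) hx ⟨ht, le_rfl⟩
  rw [ptl_zero, deltaFn]
  split_ifs <;> simp

lemma ptl_le_of_supersolution {w w' : ℝ → Conf d k → ℝ} {y : Conf d k}
    (hderiv : ∀ z ∈ SSet d k, ∀ t, 0 ≤ t → HasDerivAt (fun s => w s z) (w' t z) t)
    (hnonneg : ∀ z ∈ SSet d k, ∀ t, 0 ≤ t → 0 ≤ w t z) (hinit : 1 ≤ w 0 y)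
    (hsuper : ∀ z ∈ SSet d k, ∀ t, 0 ≤ t → w t z < ptl t z y → stirGen (w t) z ≤ w' t z)
    {x : Conf d k} (hx : x ∈ SSet d k) {t : ℝ} (ht : 0 ≤ t) : ptl t x y ≤ w t x := by
  rw [← sub_nonpos]
  refine nonpos_of_subsolution (v := fun s z => ptl s z y - w s z)
    (B := Real.exp (t * (4 * k * d)))
    (fun z hz s hs => (hasDerivAt_ptl hz y s).sub (hderiv z hz s hs.1)) (fun z hz s hs => ?_)
    (fun z hz => ?_) (fun z hz s hs hpos => ?_) hx ⟨ht, le_rfl⟩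
  · exact (sub_le_self _ (hnonneg z hz s hs.1)).trans
      ((le_abs_self _).trans (abs_ptl_le_exp_of_le hz y hs))
  · rw [ptl_zero, deltaFn]
    split_ifs with h
    · subst h
      linarith
    · linarith [hnonneg z hz 0 le_rfl]
  · have gen_sub := congrFun (map_sub stirGen (fun z => ptl s z y) (w s)) z
    have := hsuper z hz s hs.1 (sub_pos.1 hpos)
    exact (sub_le_sub_left this _).trans gen_sub.ge

end MaximumPrinciple

section IntegerHeatKernel

/-- The heat kernel of the continuous-time random walk on `ℤ` that jumps at rate one to each of its
two neighbours, as a Fourier integral. -/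
def intHeatKernel (t : ℝ) (n : ℤ) : ℝ :=
  (2 * Real.pi)⁻¹ *
    ∫ θ in (-Real.pi)..Real.pi, Real.cos (n * θ) * Real.exp (-2 * t * (1 - Real.cos θ))

lemma intervalIntegrable_cos_mul_exp (t : ℝ) (n : ℤ) (a b : ℝ) :
    IntervalIntegrable (fun θ => Real.cos (n * θ) * Real.exp (-2 * t * (1 - Real.cos θ)))
      MeasureTheory.volume a b :=
  Continuous.intervalIntegrable (by fun_prop) a b

lemma hasDerivAt_cos_mul_exp (θ t : ℝ) (n : ℤ) :
    HasDerivAt (fun s => Real.cos (n * θ) * Real.exp (-2 * s * (1 - Real.cos θ)))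
      (Real.cos (n * θ) * (Real.exp (-2 * t * (1 - Real.cos θ)) * (-2 * (1 - Real.cos θ)))) t := by
  refine (HasDerivAt.exp ?_).const_mul _
  simpa using ((hasDerivAt_id t).const_mul (-2 : ℝ)).mul_const (1 - Real.cos θ)

lemma norm_cos_mul_exp_deriv_le {s t : ℝ} (hs : s ∈ Metric.ball t 1) (θ : ℝ) (n : ℤ) :
    ‖Real.cos (n * θ) * (Real.exp (-2 * s * (1 - Real.cos θ)) * (-2 * (1 - Real.cos θ)))‖ ≤
      Real.exp (4 * (|t| + 1)) * 4 := by
  have hs' : -s ≤ |t| + 1 := by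
    rw [Metric.mem_ball, Real.dist_eq] at hs
    linarith [abs_sub_abs_le_abs_sub s t, neg_le_abs s]
  have hcos := Real.cos_le_one θ
  have hcos' := Real.neg_one_le_cos θ
  have exp_le : Real.exp (-2 * s * (1 - Real.cos θ)) ≤ Real.exp (4 * (|t| + 1)) :=
    Real.exp_le_exp.2 (by nlinarith [abs_nonneg t])
  have rate_le : |-2 * (1 - Real.cos θ)| ≤ 4 := abs_le.2 ⟨by linarith, by linarith⟩
  rw [Real.norm_eq_abs, abs_mul, abs_mul, Real.abs_exp, ← one_mul (Real.exp (4 * _) * 4)]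
  gcongr
  exact Real.abs_cos_le_one _

lemma hasDerivAt_intHeatKernel (t : ℝ) (n : ℤ) :
    HasDerivAt (fun s => intHeatKernel s n)
      (intHeatKernel t (n + 1) + intHeatKernel t (n - 1) - 2 * intHeatKernel t n) t := by
  have deriv_integral := (intervalIntegral.hasDerivAt_integral_of_dominated_loc_of_deriv_le
    (μ := MeasureTheory.volume) (a := -Real.pi) (b := Real.pi) (Metric.ball_mem_nhds t one_pos)
    (.of_forall fun s => Continuous.aestronglyMeasurable (by fun_prop))
    (intervalIntegrable_cos_mul_exp t n _ _) (Continuous.aestronglyMeasurable (by fun_prop))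
    (.of_forall fun θ _ s hs => norm_cos_mul_exp_deriv_le hs θ n) (by simp)
    (.of_forall fun θ _ s _ => hasDerivAt_cos_mul_exp θ s n)).2
  refine (deriv_integral.const_mul (2 * Real.pi)⁻¹).congr_deriv ?_
  have integrable (m : ℤ) := intervalIntegrable_cos_mul_exp t m (-Real.pi) Real.pi
  simp only [intHeatKernel]
  rw [← mul_add, mul_left_comm, ← mul_sub]
  congr 1
  rw [← intervalIntegral.integral_add (integrable _) (integrable _),
    ← intervalIntegral.integral_const_mul,
    ← intervalIntegral.integral_sub ((integrable _).add (integrable _))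
      ((integrable n).const_mul 2)]
  congr with θ
  push_cast
  rw [add_mul, sub_mul, one_mul, Real.cos_add, Real.cos_sub]
  ring

lemma exp_neg_mul_one_sub_cos_le {t : ℝ} (ht : 0 ≤ t) {θ : ℝ} (hθ : |θ| ≤ Real.pi) :
    Real.exp (-2 * t * (1 - Real.cos θ)) ≤
      Real.exp 4 * Real.exp (-(4 / Real.pi ^ 2 * (1 + t)) * θ ^ 2) := by
  rw [← Real.exp_add, Real.exp_le_exp]
  have quadratic : 4 / Real.pi ^ 2 * θ ^ 2 ≤ 2 * (1 - Real.cos θ) := by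
    have := Real.cos_le_one_sub_mul_cos_sq hθ
    linear_combination 2 * this
  nlinarith [Real.neg_one_le_cos θ]

lemma sqrt_pi_div_le {t : ℝ} (ht : 0 ≤ t) :
    √(Real.pi / (4 / Real.pi ^ 2 * (1 + t))) ≤ 2 * Real.pi / √(1 + t) := by
  rw [← Real.sqrt_sq (by positivity : 0 ≤ 2 * Real.pi), ← Real.sqrt_div (by positivity)]
  refine Real.sqrt_le_sqrt ?_
  rw [div_mul_eq_mul_div, div_div_eq_mul_div, div_le_div_iff₀ (by positivity) (by positivity)]
  nlinarith [mul_nonneg (sq_nonneg Real.pi) (sub_nonneg.2 Real.pi_le_four),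
    mul_nonneg (mul_nonneg (sq_nonneg Real.pi) (sub_nonneg.2 Real.pi_le_four)) ht]

lemma abs_intHeatKernel_le {t : ℝ} (ht : 0 ≤ t) (n : ℤ) :
    |intHeatKernel t n| ≤ Real.exp 4 / √(1 + t) := by
  have hpi := Real.pi_pos
  set β := 4 / Real.pi ^ 2 * (1 + t)
  have hβ : 0 < β := by positivity
  have integral_le : |∫ θ in (-Real.pi)..Real.pi,
      Real.cos (n * θ) * Real.exp (-2 * t * (1 - Real.cos θ))| ≤
        ∫ θ in (-Real.pi)..Real.pi, Real.exp 4 * Real.exp (-β * θ ^ 2) := by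
    rw [← Real.norm_eq_abs]
    refine intervalIntegral.norm_integral_le_of_norm_le (by linarith) (.of_forall fun θ hθ => ?_)
      (Continuous.intervalIntegrable (by fun_prop) _ _)
    rw [Real.norm_eq_abs, abs_mul, Real.abs_exp]
    exact (mul_le_of_le_one_left (Real.exp_pos _).le (Real.abs_cos_le_one _)).trans
      (exp_neg_mul_one_sub_cos_le ht (abs_le.2 ⟨hθ.1.le, hθ.2⟩))
  have gaussian_le : ∫ θ in (-Real.pi)..Real.pi, Real.exp (-β * θ ^ 2) ≤ √(Real.pi / β) := by
    rw [← integral_gaussian, intervalIntegral.integral_of_le (by linarith)]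
    exact MeasureTheory.setIntegral_le_integral (integrable_exp_neg_mul_sq hβ)
      (.of_forall fun _ => (Real.exp_pos _).le)
  rw [intervalIntegral.integral_const_mul] at integral_le
  rw [intHeatKernel, abs_mul, abs_of_pos (by positivity)]
  calc (2 * Real.pi)⁻¹ * |_| ≤ (2 * Real.pi)⁻¹ * (Real.exp 4 * (2 * Real.pi / √(1 + t))) := by
        gcongr
        refine integral_le.trans ?_
        gcongr
        exact gaussian_le.trans (sqrt_pi_div_le ht)
    _ = Real.exp 4 / √(1 + t) := by field_simp

lemma intHeatKernel_zero (n : ℤ) : intHeatKernel 0 n = if n = 0 then 1 else 0 := by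
  simp only [intHeatKernel, mul_zero, zero_mul, Real.exp_zero, mul_one]
  split_ifs with hn
  · simp only [hn, Int.cast_zero, zero_mul, Real.cos_zero, intervalIntegral.integral_const,
      smul_eq_mul, mul_one, sub_neg_eq_add, ← two_mul]
    exact inv_mul_cancel₀ (by positivity)
  · rw [intervalIntegral.integral_comp_mul_left (fun θ => Real.cos θ) (Int.cast_ne_zero.2 hn),
      integral_cos]
    simp [Real.sin_int_mul_pi]

lemma intHeatKernel_nonneg {t : ℝ} (ht : 0 ≤ t) (n : ℤ) : 0 ≤ intHeatKernel t n := by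
  rw [← neg_nonpos]
  refine nonpos_of_subsolution (d := 1) (k := 1) (v := fun s z => -intHeatKernel s (z 0 0))
    (v' := fun s => stirGen fun z => -intHeatKernel s (z 0 0)) (B := Real.exp 4)
    (x := fun _ _ => n) (fun z _ s _ => ?_) (fun z _ s hs => ?_) (fun z _ => ?_)
    (fun _ _ _ _ _ => le_rfl) (fun i j hij => absurd (Subsingleton.elim i j) hij) ⟨ht, le_rfl⟩
  · refine (hasDerivAt_intHeatKernel s (z 0 0)).neg.congr_deriv ?_
    have := (stirGen_sum_site (fun _ a => ∑ m : Fin 1, -intHeatKernel s (a m)) z).trans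
      (Finset.sum_congr rfl fun i _ => lap_sum_coord (fun _ c => -intHeatKernel s c) (z i))
    simp only [Finset.univ_unique, Finset.sum_singleton, Fin.default_eq_zero] at this
    rw [this]
    ring
  · refine (neg_le_abs _).trans ((abs_intHeatKernel_le hs.1 _).trans ?_)
    exact div_le_self (Real.exp_pos 4).le (Real.one_le_sqrt.2 (by linarith [hs.1]))
  · rw [intHeatKernel_zero]
    split_ifs <;> simp

end IntegerHeatKernel

section OnDiagonal

variable {d k : ℕ}

/-- The heat kernel of a simple random walk on `ℤ^d`, whose coordinates are independent walks
on `ℤ`. -/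
def siteHeatKernel (t : ℝ) (a : Site d) : ℝ := ∏ m, intHeatKernel t (a m)

lemma siteHeatKernel_nonneg {t : ℝ} (ht : 0 ≤ t) (a : Site d) : 0 ≤ siteHeatKernel t a :=
  Finset.prod_nonneg fun _ _ => intHeatKernel_nonneg ht _

lemma siteHeatKernel_le {t : ℝ} (ht : 0 ≤ t) (a : Site d) :
    siteHeatKernel t a ≤ (Real.exp 4 / √(1 + t)) ^ d := by
  rw [← Fin.prod_const]
  exact Finset.prod_le_prod (fun m _ => intHeatKernel_nonneg ht (a m))
    fun m _ => (le_abs_self _).trans (abs_intHeatKernel_le ht (a m))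

lemma siteHeatKernel_zero_zero : siteHeatKernel 0 (0 : Site d) = 1 := by
  simp [siteHeatKernel, intHeatKernel_zero]

lemma lap_prod_coord (g : Fin d → ℤ → ℝ) (a : Site d) :
    lap (fun a => ∏ m, g m (a m)) a = ∑ m, (∏ l ∈ Finset.univ.erase m, g l (a l)) *
      (g m (a m + 1) + g m (a m - 1) - 2 * g m (a m)) := by
  refine Finset.sum_congr rfl fun m _ => ?_
  have shift (s : ℤ) : ∏ l, g l ((a + s • unitVec m) l) =
      (∏ l ∈ Finset.univ.erase m, g l (a l)) * g m (a m + s) := by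
    rw [← Finset.prod_erase_mul _ _ (Finset.mem_univ m)]
    congr 1
    · refine Finset.prod_congr rfl fun l hl => ?_
      simp [unitVec, Finset.ne_of_mem_erase hl]
    · simp [unitVec]
  have up := shift 1
  have down := shift (-1)
  have stay := shift 0
  simp only [one_smul, neg_smul, zero_smul, add_zero, ← sub_eq_add_neg] at up down stay
  simp only [up, down, stay]
  ring

lemma hasDerivAt_siteHeatKernel_sub (c : Site d) (t : ℝ) (a : Site d) :
    HasDerivAt (fun s => siteHeatKernel s (a - c)) (lap (fun a => siteHeatKernel t (a - c)) a)
      t := by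
  refine (HasDerivAt.fun_finsetProd fun m _ =>
    hasDerivAt_intHeatKernel t (a m - c m)).congr_deriv ?_
  refine Eq.trans ?_ (lap_prod_coord (fun m n => intHeatKernel t (n - c m)) a).symm
  simp only [smul_eq_mul, add_sub_right_comm, sub_right_comm]

/-- The total heat at the site `a` at time `t` when one walk starts from each particle of `y`. -/
def heatFrom (y : Conf d k) (t : ℝ) (a : Site d) : ℝ := ∑ l, siteHeatKernel t (a - y l)

lemma heatFrom_nonneg (y : Conf d k) {t : ℝ} (ht : 0 ≤ t) (a : Site d) : 0 ≤ heatFrom y t a :=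
  Finset.sum_nonneg fun _ _ => siteHeatKernel_nonneg ht _

lemma heatFrom_le (y : Conf d k) {t : ℝ} (ht : 0 ≤ t) (a : Site d) :
    heatFrom y t a ≤ k * (Real.exp 4 / √(1 + t)) ^ d := by
  simpa [heatFrom] using
    Finset.sum_le_sum (s := Finset.univ) fun l _ => siteHeatKernel_le ht (a - y l)

lemma one_le_heatFrom_zero_self (y : Conf d k) (i : Fin k) : 1 ≤ heatFrom y 0 (y i) := by
  rw [← siteHeatKernel_zero_zero (d := d), ← sub_self (y i)]
  exact Finset.single_le_sum (f := fun l => siteHeatKernel 0 (y i - y l))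
    (fun l _ => siteHeatKernel_nonneg le_rfl _) (Finset.mem_univ i)

lemma hasDerivAt_heatFrom (y : Conf d k) (t : ℝ) (a : Site d) :
    HasDerivAt (fun s => heatFrom y s a) (lap (heatFrom y t) a) t := by
  refine (HasDerivAt.fun_sum fun l _ =>
    hasDerivAt_siteHeatKernel_sub (y l) t a).congr_deriv ?_
  simp only [lap, heatFrom]
  rw [Finset.sum_comm]
  refine Finset.sum_congr rfl fun m _ => ?_
  rw [Finset.sum_sub_distrib, Finset.sum_add_distrib, Finset.mul_sum]

lemma prod_stir_sub_prod_le_of_pair (U : Site d → ℝ) (hU : ∀ a, 0 ≤ U a) {x : Conf d k}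
    (hx : x ∈ SSet d k) {i j : Fin k} (hij : i ≠ j) :
    ∏ l, U (stir s(x i, x j) x l) - ∏ l, U (x l) ≤
      ∑ l, (∏ m ∈ Finset.univ.erase l, U (x m)) * (U (bondSwap s(x i, x j) (x l)) - U (x l)) := by
  have prod_swap : ∏ l, U (stir s(x i, x j) x l) = ∏ l, U (x l) := by
    rw [stir_mk_apply_apply hx]
    exact Equiv.prod_comp (Equiv.swap i j) fun l => U (x l)
  have fixed (l : Fin k) (hl : l ∉ ({i, j} : Finset (Fin k))) :
      bondSwap s(x i, x j) (x l) = x l := by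
    simp only [Finset.mem_insert, Finset.mem_singleton, not_or] at hl
    exact Equiv.swap_apply_of_ne_of_ne (hx l i hl.1) (hx l j hl.2)
  set Q := ∏ l ∈ (Finset.univ.erase i).erase j, U (x l) with hQ
  have hprod_i : ∏ l ∈ Finset.univ.erase i, U (x l) = U (x j) * Q :=
    (Finset.mul_prod_erase _ (fun l => U (x l)) (by simp [hij.symm])).symm
  have hprod_j : ∏ l ∈ Finset.univ.erase j, U (x l) = U (x i) * Q := by
    rw [hQ, Finset.erase_right_comm]
    exact (Finset.mul_prod_erase _ (fun l => U (x l)) (by simp [hij])).symm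
  rw [prod_swap, sub_self, ← Finset.sum_subset (Finset.subset_univ {i, j})
    fun l _ hl => by rw [fixed l hl, sub_self, mul_zero], Finset.sum_pair hij, hprod_i, hprod_j]
  simp only [bondSwap_mk, Equiv.swap_apply_left, Equiv.swap_apply_right]
  have hQ_nonneg : 0 ≤ Q := Finset.prod_nonneg fun l _ => hU (x l)
  nlinarith [mul_nonneg hQ_nonneg (sq_nonneg (U (x j) - U (x i)))]

lemma prod_stir_sub_prod_eq_of_single (U : Site d → ℝ) {x : Conf d k} {b : Sym2 (Site d)}
    {i : Fin k} (hi : ∀ j, j ≠ i → x j ∉ b) :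
    ∏ l, U (stir b x l) - ∏ l, U (x l) =
      ∑ l, (∏ m ∈ Finset.univ.erase l, U (x m)) * (U (bondSwap b (x l)) - U (x l)) := by
  have fixed (j : Fin k) (hj : j ≠ i) : bondSwap b (x j) = x j := bondSwap_of_notMem (hi j hj)
  rw [Finset.sum_eq_single i (fun j _ hj => by rw [fixed j hj, sub_self, mul_zero]) (by simp),
    ← Finset.prod_erase_mul _ (fun l => U (x l)) (Finset.mem_univ i),
    ← Finset.prod_erase_mul _ (fun l => U (stir b x l)) (Finset.mem_univ i), mul_sub]
  refine congrArg₂ _ (congrArg₂ _ (Finset.prod_congr rfl fun j hj => ?_) rfl) rfl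
  rw [stir, fixed j (Finset.ne_of_mem_erase hj)]

lemma prod_stir_sub_prod_le (U : Site d → ℝ) (hU : ∀ a, 0 ≤ U a) {x : Conf d k}
    (hx : x ∈ SSet d k) (b : Sym2 (Site d)) :
    ∏ i, U (stir b x i) - ∏ i, U (x i) ≤
      ∑ i, (∏ j ∈ Finset.univ.erase i, U (x j)) * (U (bondSwap b (x i)) - U (x i)) := by
  by_cases hempty : ∀ i, x i ∉ b
  · simp [stir, bondSwap_of_notMem (hempty _)]
  push Not at hempty
  obtain ⟨i, hi⟩ := hempty
  by_cases hpair : ∃ j, j ≠ i ∧ x j ∈ b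
  · obtain ⟨j, hji, hj⟩ := hpair
    obtain rfl := (Sym2.mem_and_mem_iff (hx i j hji.symm)).1 ⟨hi, hj⟩
    exact prod_stir_sub_prod_le_of_pair U hU hx hji.symm
  · push Not at hpair
    exact (prod_stir_sub_prod_eq_of_single U hpair).le

lemma stirGen_prod_le (U : Site d → ℝ) (hU : ∀ a, 0 ≤ U a) {x : Conf d k} (hx : x ∈ SSet d k) :
    stirGen (fun z => ∏ i, U (z i)) x ≤
      ∑ i, (∏ j ∈ Finset.univ.erase i, U (x j)) * lap U (x i) := by
  rw [stirGen_apply]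
  refine (Finset.sum_le_sum fun b _ => prod_stir_sub_prod_le U hU hx b).trans_eq ?_
  rw [Finset.sum_comm]
  refine Finset.sum_congr rfl fun i _ => ?_
  rw [← Finset.mul_sum, sum_bondSwap_sub U (bondsAt_subset_bondsOf x i) edgeSet_of_mem_bondsOf]

/-- Liggett's comparison with independent walks: a bond joining two particles at `a` and `b` adds
nothing to the exclusion generator of the product, but `(U a - U b) ^ 2 ≥ 0` times the other factors
to that of independent walks. -/
lemma ptl_le_prod_heatFrom {x : Conf d k} (hx : x ∈ SSet d k) (y : Conf d k) {t : ℝ}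
    (ht : 0 ≤ t) : ptl t x y ≤ ∏ i, heatFrom y t (x i) :=
  ptl_le_of_supersolution (w := fun t z => ∏ i, heatFrom y t (z i))
    (fun z _ s _ => HasDerivAt.fun_finsetProd fun i _ => hasDerivAt_heatFrom y s (z i))
    (fun _ _ _ hs => Finset.prod_nonneg fun _ _ => heatFrom_nonneg y hs _)
    (Finset.one_le_prod fun i _ => one_le_heatFrom_zero_self y i)
    (fun _ hz _ hs _ => stirGen_prod_le _ (heatFrom_nonneg y hs) hz) hx ht

lemma exists_ptl_le_div_sqrt_pow (d k : ℕ) :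
    ∃ C > 0, ∀ x ∈ SSet d k, ∀ y : Conf d k, ∀ t, 0 ≤ t → ptl t x y ≤ C / √(1 + t) ^ (k * d) := by
  refine ⟨(k + 1) ^ k * Real.exp 4 ^ (k * d), by positivity, fun x hx y t ht => ?_⟩
  have heat_le (i : Fin k) : heatFrom y t (x i) ≤ (k + 1) * (Real.exp 4 / √(1 + t)) ^ d :=
    (heatFrom_le y ht _).trans (by gcongr; linarith)
  calc ptl t x y ≤ ∏ i, heatFrom y t (x i) := ptl_le_prod_heatFrom hx y ht
    _ ≤ ∏ _i : Fin k, (k + 1) * (Real.exp 4 / √(1 + t)) ^ d :=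
        Finset.prod_le_prod (fun i _ => heatFrom_nonneg y ht _) fun i _ => heat_le i
    _ = (k + 1) ^ k * Real.exp 4 ^ (k * d) / √(1 + t) ^ (k * d) := by
        rw [Finset.prod_const, Finset.card_fin, mul_pow, ← pow_mul, div_pow, mul_comm d k,
          mul_div_assoc]

end OnDiagonal

section OffDiagonal

lemma exists_inv_one_add_pow_le (n : ℕ) : ∃ C : ℝ, 0 ≤ C ∧ ∀ ε : ℝ, |ε| ≤ 1 / 2 →
    (1 + ε)⁻¹ ^ n ≤ 1 - n * ε + C * ε ^ 2 := by
  induction n with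
  | zero => exact ⟨0, le_rfl, fun ε _ => by simp⟩
  | succ n ih =>
    obtain ⟨C, hC, ih⟩ := ih
    refine ⟨2 * C + 2 * n + 2, by positivity, fun ε hε => ?_⟩
    obtain ⟨hlo, hhi⟩ := abs_le.1 hε
    have hpos : 0 < 1 + ε := by linarith
    have inv_le : (1 + ε)⁻¹ ≤ 1 - ε + 2 * ε ^ 2 := by
      rw [inv_le_iff_one_le_mul₀ hpos]
      nlinarith [sq_nonneg ε]
    have remainder_le : (-ε) * (C + 2 * n) + 2 * C * ε ^ 2 ≤ C + n := by
      have : (-ε) * (C + 2 * n) ≤ 1 / 2 * (C + 2 * n) := by gcongr; linarith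
      nlinarith [mul_nonneg hC (by nlinarith : 0 ≤ 1 / 4 - ε ^ 2)]
    calc (1 + ε)⁻¹ ^ (n + 1) = (1 + ε)⁻¹ ^ n * (1 + ε)⁻¹ := pow_succ _ _
      _ ≤ (1 - n * ε + C * ε ^ 2) * (1 - ε + 2 * ε ^ 2) :=
          mul_le_mul (ih ε hε) inv_le (by positivity) ((by positivity : 0 ≤ (1 + ε)⁻¹ ^ n).trans
            (ih ε hε))
      _ = 1 - (n + 1) * ε + ε ^ 2 * (C + n + 2 + ((-ε) * (C + 2 * n) + 2 * C * ε ^ 2)) := by ring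
      _ ≤ 1 - (n + 1) * ε + ε ^ 2 * (C + n + 2 + (C + n)) := by gcongr
      _ = 1 - (n + 1 : ℕ) * ε + (2 * C + 2 * n + 2) * ε ^ 2 := by push_cast; ring

/-- For `r ≥ 64` an increment with `Δ² ≤ 16 r` satisfies `|Δ| ≤ r / 2`, which is what makes the
second-order expansion of `r ↦ r⁻ⁿ` uniform. -/
lemma exists_inv_add_pow_sub_le (n : ℕ) : ∃ C : ℝ, 0 ≤ C ∧ ∀ r Δ : ℝ, 64 ≤ r → Δ ^ 2 ≤ 16 * r →
    (r + Δ)⁻¹ ^ n - r⁻¹ ^ n ≤ r⁻¹ ^ n * r⁻¹ * (C - n * Δ) := by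
  obtain ⟨C, hC, hexp⟩ := exists_inv_one_add_pow_le n
  refine ⟨16 * C, by positivity, fun r Δ hr hΔ => ?_⟩
  have hr0 : 0 < r := by linarith
  have hε : |Δ * r⁻¹| ≤ 1 / 2 := by
    rw [abs_mul, abs_inv, abs_of_pos hr0, ← div_eq_mul_inv, div_le_iff₀ hr0]
    exact abs_le_of_sq_le_sq (by nlinarith) (by positivity)
  have sq_le : (Δ * r⁻¹) ^ 2 ≤ 16 * r⁻¹ := by
    calc (Δ * r⁻¹) ^ 2 = Δ ^ 2 * (r⁻¹ * r⁻¹) := by ring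
      _ ≤ 16 * r * (r⁻¹ * r⁻¹) := by gcongr
      _ = 16 * r⁻¹ := by field_simp
  have factor : r + Δ = r * (1 + Δ * r⁻¹) := by field_simp
  calc (r + Δ)⁻¹ ^ n - r⁻¹ ^ n = r⁻¹ ^ n * ((1 + Δ * r⁻¹)⁻¹ ^ n - 1) := by
        rw [factor, mul_inv, mul_pow]
        ring
    _ ≤ r⁻¹ ^ n * (1 - n * (Δ * r⁻¹) + C * (16 * r⁻¹) - 1) := by
        gcongr
        exact (hexp _ hε).trans (by gcongr)
    _ = r⁻¹ ^ n * r⁻¹ * (16 * C - n * Δ) := by ring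

variable {d k : ℕ}

lemma confSq_eq_sum_prod (x : Conf d k) : confSq x = ∑ p : Fin k × Fin d, (x p.1 p.2 : ℝ) ^ 2 :=
  (Fintype.sum_prod_type fun p : Fin k × Fin d => (x p.1 p.2 : ℝ) ^ 2).symm

lemma sq_confSq_add_sub_le (u w : Conf d k) :
    (confSq (u + w) - confSq u) ^ 2 ≤ confSq w * (8 * confSq u + 2 * confSq w) := by
  simp only [confSq_eq_sum_prod]
  have expand : ∑ p : Fin k × Fin d, ((u + w) p.1 p.2 : ℝ) ^ 2 - ∑ p : Fin k × Fin d,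
      (u p.1 p.2 : ℝ) ^ 2 = ∑ p : Fin k × Fin d, (w p.1 p.2 : ℝ) * (2 * u p.1 p.2 + w p.1 p.2) := by
    rw [← Finset.sum_sub_distrib]
    refine Finset.sum_congr rfl fun p _ => ?_
    simp only [Pi.add_apply, Int.cast_add]
    ring
  rw [expand]
  refine (Finset.sum_mul_sq_le_sq_mul_sq _ _ _).trans ?_
  gcongr
  rw [Finset.mul_sum, Finset.mul_sum, ← Finset.sum_add_distrib]
  gcongr with p
  nlinarith [sq_nonneg (2 * (u p.1 p.2 : ℝ) - w p.1 p.2)]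

lemma card_filter_mem_le_two {x : Conf d k} (hx : x ∈ SSet d k) (b : Sym2 (Site d)) :
    (Finset.univ.filter fun i => x i ∈ b).card ≤ 2 :=
  calc (Finset.univ.filter fun i => x i ∈ b).card ≤ b.toFinset.card :=
        Finset.card_le_card_of_injOn x (fun i hi => by simpa using hi)
          (mem_SSet_iff_injective.1 hx).injOn
    _ ≤ 2 := by
        rw [Sym2.card_toFinset]
        split_ifs <;> norm_num

lemma confSq_stir_sub_self_le {x : Conf d k} (hx : x ∈ SSet d k) {b : Sym2 (Site d)}
    (hb : b ∈ (lattice d).edgeSet) : confSq (stir b x - x) ≤ 2 :=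
  calc confSq (stir b x - x) = ∑ i, if x i ∈ b then 1 else 0 := by
        refine Finset.sum_congr rfl fun i _ => ?_
        split_ifs with hi
        · exact siteSq_bondSwap_sub (mem_bondsAt.2 ⟨hi, hb⟩)
        · simp [stir, bondSwap_of_notMem hi, siteSq_eq_zero]
    _ = (Finset.univ.filter fun i => x i ∈ b).card := Finset.sum_boole _ _
    _ ≤ 2 := mod_cast card_filter_mem_le_two hx b

lemma sq_confSq_stir_sub_le (c : Conf d k) {x : Conf d k} (hx : x ∈ SSet d k) {b : Sym2 (Site d)}
    (hb : b ∈ (lattice d).edgeSet) :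
    (confSq (stir b x - c) - confSq (x - c)) ^ 2 ≤ 16 * confSq (x - c) + 8 := by
  have hstir : stir b x - c = (x - c) + (stir b x - x) := by abel
  have hle := confSq_stir_sub_self_le hx hb
  have hnn := confSq_nonneg (x - c)
  calc (confSq (stir b x - c) - confSq (x - c)) ^ 2
      ≤ confSq (stir b x - x) * (8 * confSq (x - c) + 2 * confSq (stir b x - x)) :=
        hstir ▸ sq_confSq_add_sub_le (x - c) (stir b x - x)
    _ ≤ 2 * (8 * confSq (x - c) + 2 * 2) := by
        have := confSq_nonneg (stir b x - x)
        gcongr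
    _ = 16 * confSq (x - c) + 8 := by ring

lemma exists_stirGen_inv_pow_le (d k n : ℕ) : ∃ C : ℝ, 0 ≤ C ∧ ∀ c : Conf d k, ∀ x ∈ SSet d k,
    stirGen (fun z => (64 + confSq (z - c))⁻¹ ^ n) x ≤
      C * (k * d) * ((64 + confSq (x - c))⁻¹ * (64 + confSq (x - c))⁻¹ ^ n) := by
  obtain ⟨C, hC, hinc⟩ := exists_inv_add_pow_sub_le n
  refine ⟨2 * C, by positivity, fun c x hx => ?_⟩
  have hs := confSq_nonneg (x - c)
  set r := 64 + confSq (x - c) with hr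
  have bond_le (b) (hb : b ∈ bondsOf x) : (64 + confSq (stir b x - c))⁻¹ ^ n - r⁻¹ ^ n ≤
      r⁻¹ ^ n * r⁻¹ * (C - n * (confSq (stir b x - c) - confSq (x - c))) := by
    have := hinc r (confSq (stir b x - c) - confSq (x - c)) (by linarith)
      ((sq_confSq_stir_sub_le c hx (edgeSet_of_mem_bondsOf b hb)).trans (by linarith))
    rwa [show r + (confSq (stir b x - c) - confSq (x - c)) = 64 + confSq (stir b x - c) by
      rw [hr]; ring] at this
  have drift : ∑ b ∈ bondsOf x, (confSq (stir b x - c) - confSq (x - c)) = 2 * k * d :=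
    stirGen_confSq_sub c x
  have hcard : ((bondsOf x).card : ℝ) ≤ k * (2 * d) := mod_cast card_bondsOf_le x
  calc stirGen (fun z => (64 + confSq (z - c))⁻¹ ^ n) x
      ≤ ∑ b ∈ bondsOf x, r⁻¹ ^ n * r⁻¹ * (C - n * (confSq (stir b x - c) - confSq (x - c))) :=
        Finset.sum_le_sum bond_le
    _ = r⁻¹ ^ n * r⁻¹ * ((bondsOf x).card * C - n * (2 * k * d)) := by
        rw [← Finset.mul_sum, Finset.sum_sub_distrib, ← Finset.mul_sum, drift, Finset.sum_const,
          nsmul_eq_mul]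
    _ ≤ r⁻¹ ^ n * r⁻¹ * (k * (2 * d) * C) := by
        gcongr
        exact (sub_le_self _ (by positivity)).trans (by gcongr)
    _ = 2 * C * (k * d) * (r⁻¹ * r⁻¹ ^ n) := by ring

lemma hasDerivAt_sqrt_one_add_pow (n : ℕ) {t : ℝ} (ht : 0 ≤ t) :
    HasDerivAt (fun s => √(1 + s) ^ n) (n / (2 * (1 + t)) * √(1 + t) ^ n) t := by
  have hpos : 0 < 1 + t := by linarith
  refine ((((hasDerivAt_id t).const_add 1).sqrt hpos.ne').fun_pow n).congr_deriv ?_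
  cases n with
  | zero => simp
  | succ n =>
    simp only [id, Nat.add_sub_cancel, pow_succ]
    field_simp
    rw [Real.sq_sqrt hpos.le]

lemma exists_stirGen_inv_pow_le_of_le (d k : ℕ) : ∃ K > 0, ∀ c : Conf d k, ∀ x ∈ SSet d k,
    ∀ s, 0 ≤ s → K * (1 + s) ≤ 64 + confSq (x - c) →
      stirGen (fun z => (64 + confSq (z - c))⁻¹ ^ (k * d)) x ≤
        (k * d : ℕ) / (2 * (1 + s)) * (64 + confSq (x - c))⁻¹ ^ (k * d) := by
  obtain ⟨C, hC, hgen⟩ := exists_stirGen_inv_pow_le d k (k * d)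
  refine ⟨2 * C + 1, by positivity, fun c x hx s hs hle => ?_⟩
  have hr := confSq_nonneg (x - c)
  have rate_le : C * (64 + confSq (x - c))⁻¹ ≤ 1 / (2 * (1 + s)) := by
    rw [← div_eq_mul_inv, div_le_div_iff₀ (by positivity) (by positivity)]
    linarith
  calc stirGen (fun z => (64 + confSq (z - c))⁻¹ ^ (k * d)) x
      ≤ C * (k * d) * ((64 + confSq (x - c))⁻¹ * (64 + confSq (x - c))⁻¹ ^ (k * d)) := hgen c x hx
    _ = (k * d) * (C * (64 + confSq (x - c))⁻¹) * (64 + confSq (x - c))⁻¹ ^ (k * d) := by ring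
    _ ≤ (k * d) * (1 / (2 * (1 + s))) * (64 + confSq (x - c))⁻¹ ^ (k * d) := by gcongr
    _ = (k * d : ℕ) / (2 * (1 + s)) * (64 + confSq (x - c))⁻¹ ^ (k * d) := by
        push_cast
        ring

lemma div_sqrt_pow_le_of_lt {C K s r : ℝ} (hC : 0 ≤ C) (hs : 0 ≤ s) (hr : 0 < r)
    (hlt : r < K * (1 + s)) (n : ℕ) :
    C / √(1 + s) ^ n ≤ C * K ^ n * (√(1 + s) ^ n * r⁻¹ ^ n) := by
  have hroot : 0 < √(1 + s) := Real.sqrt_pos.2 (by linarith)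
  rw [mul_assoc, ← mul_pow, ← mul_pow, ← mul_one_div, ← one_div_pow]
  gcongr
  rw [← mul_assoc, ← div_eq_mul_inv, div_le_div_iff₀ hroot hr, one_mul, mul_assoc,
    Real.mul_self_sqrt (by linarith)]
  exact hlt.le

lemma exists_ptl_le_sqrt_pow_mul_inv_pow (d k : ℕ) :
    ∃ A > 0, ∀ x ∈ SSet d k, ∀ y : Conf d k, ∀ t, 0 ≤ t →
      ptl t x y ≤ A * (√(1 + t) ^ (k * d) * (64 + confSq (x - y))⁻¹ ^ (k * d)) := by
  obtain ⟨C, hC, hdiag⟩ := exists_ptl_le_div_sqrt_pow d k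
  obtain ⟨K, hK, hgen⟩ := exists_stirGen_inv_pow_le_of_le d k
  refine ⟨C * K ^ (k * d) + 64 ^ (k * d), by positivity, fun x hx y t ht => ?_⟩
  set A := C * K ^ (k * d) + 64 ^ (k * d)
  refine ptl_le_of_supersolution
    (w := fun t z => A * (√(1 + t) ^ (k * d) * (64 + confSq (z - y))⁻¹ ^ (k * d)))
    (fun z _ s hs => ((hasDerivAt_sqrt_one_add_pow (k * d) hs).mul_const _).const_mul _)
    (fun z _ s _ => ?_) ?_ (fun z hz s hs hlt => ?_) hx ht
  · have := confSq_nonneg (z - y)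
    positivity
  · simp only [sub_self, confSq_zero, add_zero, Real.sqrt_one, one_pow, one_mul, inv_pow]
    rw [← div_eq_mul_inv, one_le_div (by positivity)]
    exact le_add_of_nonneg_left (by positivity)
  · have hr := confSq_nonneg (z - y)
    -- Where this fails, the on-diagonal bound is already below the supersolution.
    have hfar : K * (1 + s) ≤ 64 + confSq (z - y) := by
      by_contra! hnear
      refine hlt.not_ge ((hdiag z hz y s hs).trans
        ((div_sqrt_pow_le_of_lt hC.le hs (by positivity) hnear _).trans ?_))
      gcongr
      exact le_add_of_nonneg_right (by positivity)
    simp only [← mul_assoc]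
    calc stirGen (fun z => A * √(1 + s) ^ (k * d) * (64 + confSq (z - y))⁻¹ ^ (k * d)) z
        = A * √(1 + s) ^ (k * d) * stirGen (fun z => (64 + confSq (z - y))⁻¹ ^ (k * d)) z :=
          congrFun (map_smul stirGen (A * √(1 + s) ^ (k * d)) _) z
      _ ≤ A * √(1 + s) ^ (k * d) *
          ((k * d : ℕ) / (2 * (1 + s)) * (64 + confSq (z - y))⁻¹ ^ (k * d)) := by
          gcongr
          exact hgen y z hz s hs hfar
      _ = A * ((k * d : ℕ) / (2 * (1 + s))) * √(1 + s) ^ (k * d) *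
          (64 + confSq (z - y))⁻¹ ^ (k * d) := by ring

lemma exists_ptl_le_div_sqrt_add_confSq_pow (d k : ℕ) :
    ∃ C > 0, ∀ x ∈ SSet d k, ∀ y : Conf d k, ∀ t, 0 ≤ t →
      ptl t x y ≤ C / √(1 + t + confSq (x - y)) ^ (k * d) := by
  obtain ⟨C, hC, hdiag⟩ := exists_ptl_le_div_sqrt_pow d k
  obtain ⟨A, hA, hoff⟩ := exists_ptl_le_sqrt_pow_mul_inv_pow d k
  refine ⟨(C + A) * 2 ^ (k * d), by positivity, fun x hx y t ht => ?_⟩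
  have hs := confSq_nonneg (x - y)
  set s := confSq (x - y)
  have ha : 0 < √(1 + t) := Real.sqrt_pos.2 (by linarith)
  have hq : 0 < √(1 + t + s) := Real.sqrt_pos.2 (by linarith)
  have ha_sq := Real.sq_sqrt (by linarith : 0 ≤ 1 + t)
  have hq_sq := Real.sq_sqrt (by linarith : 0 ≤ 1 + t + s)
  rw [mul_div_assoc, ← div_pow]
  rcases le_or_gt s (1 + t) with hle | hlt
  · calc ptl t x y ≤ C * (1 / √(1 + t)) ^ (k * d) := by
          rw [one_div_pow, mul_one_div]
          exact hdiag x hx y t ht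
      _ ≤ (C + A) * (2 / √(1 + t + s)) ^ (k * d) := by
          gcongr ?_ * ?_ ^ _
          · exact le_add_of_nonneg_right hA.le
          · rw [div_le_div_iff₀ ha hq, one_mul]
            exact abs_le_of_sq_le_sq' (by nlinarith) (by positivity) |>.2
  · calc ptl t x y ≤ A * (√(1 + t) * (64 + s)⁻¹) ^ (k * d) := by
          rw [mul_pow]
          exact hoff x hx y t ht
      _ ≤ (C + A) * (2 / √(1 + t + s)) ^ (k * d) := by
          gcongr ?_ * ?_ ^ _
          · exact le_add_of_nonneg_left hC.le
          · have : √(1 + t) ≤ √(1 + t + s) := Real.sqrt_le_sqrt (by linarith)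
            rw [← div_eq_mul_inv, div_le_div_iff₀ (by positivity) hq]
            nlinarith

end OffDiagonal

section LogPair

variable {d k : ℕ}

/-- The function `log (1 + |a|²)` of a relative position `a`. It is subharmonic for the simple walk
in dimension at least two, and exclusion gives it strictly positive drift at adjacent particles,
which makes it the barrier that controls collisions. -/
def logSq (a : Site d) : ℝ := Real.log (1 + siteSq a)

lemma logSq_nonneg (a : Site d) : 0 ≤ logSq a :=
  Real.log_nonneg (by linarith [siteSq_nonneg a])

lemma logSq_sub_comm (a c : Site d) : logSq (a - c) = logSq (c - a) := by
  rw [logSq, logSq, siteSq_sub_comm]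

lemma siteSq_add_unitVec (a : Site d) (m : Fin d) :
    siteSq (a + unitVec m) = siteSq a + 2 * a m + 1 := by
  rw [← sub_eq_iff_eq_add, ← sub_eq_iff_eq_add', sub_right_comm, siteSq, siteSq,
    ← Finset.sum_sub_distrib, Finset.sum_eq_single m]
  · simp [unitVec]
    ring
  · intro j _ hj
    simp [unitVec, hj]
  · simp

lemma siteSq_sub_unitVec (a : Site d) (m : Fin d) :
    siteSq (a - unitVec m) = siteSq a - 2 * a m + 1 := by
  rw [siteSq_sub_comm, ← neg_add_eq_sub, siteSq_add_unitVec, siteSq_neg]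
  simp
  ring

lemma one_sub_sum_le_prod_one_sub {ι : Type*} (s : Finset ι) {p : ι → ℝ}
    (h0 : ∀ i ∈ s, 0 ≤ p i) (h1 : ∀ i ∈ s, p i ≤ 1) : 1 - ∑ i ∈ s, p i ≤ ∏ i ∈ s, (1 - p i) := by
  induction s using Finset.induction_on with
  | empty => simp
  | insert i s hi ih =>
    rw [Finset.forall_mem_insert] at h0 h1
    have hle := ih h0.2 h1.2
    have hprod : ∏ j ∈ s, (1 - p j) ≤ 1 := Finset.prod_le_one
      (fun j hj => sub_nonneg.2 (h1.2 j hj)) (fun j hj => sub_le_self _ (h0.2 j hj))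
    rw [Finset.sum_insert hi, Finset.prod_insert hi]
    linarith [mul_le_mul_of_nonneg_left hprod h0.1]

lemma pow_le_prod_sq_sub {n : ℕ} (hn : 2 ≤ n) (v : Fin n → ℝ) :
    (1 + ∑ m, v m ^ 2) ^ (2 * n) ≤ ∏ m, ((2 + ∑ m, v m ^ 2) ^ 2 - 4 * v m ^ 2) := by
  set s := ∑ m, v m ^ 2
  have hs : 0 ≤ s := Finset.sum_nonneg fun _ _ => sq_nonneg _
  have hv (m) : v m ^ 2 ≤ s :=
    Finset.single_le_sum (f := fun m => v m ^ 2) (fun _ _ => sq_nonneg _) (Finset.mem_univ m)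
  have hB : 0 < (2 + s) ^ 2 := by positivity
  have sum_eq : ∑ m, 4 * v m ^ 2 / (2 + s) ^ 2 = 4 * s / (2 + s) ^ 2 := by
    rw [← Finset.sum_div, ← Finset.mul_sum]
  have base_le : ((1 + s) / (2 + s)) ^ 4 ≤ 1 - 4 * s / (2 + s) ^ 2 := by
    rw [div_pow, div_le_iff₀ (by positivity)]
    have : (1 - 4 * s / (2 + s) ^ 2) * (2 + s) ^ 4 = (2 + s) ^ 4 - 4 * s * (2 + s) ^ 2 := by
      field_simp
    rw [this]
    nlinarith [sq_nonneg (1 + s)]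
  calc (1 + s) ^ (2 * n) = ((2 + s) ^ 2) ^ n * ((1 + s) / (2 + s)) ^ (2 * n) := by
        rw [← pow_mul, ← mul_pow, mul_div_cancel₀ _ (by positivity)]
    _ ≤ ((2 + s) ^ 2) ^ n * ((1 + s) / (2 + s)) ^ 4 := by
        gcongr ?_ * ?_
        exact pow_le_pow_of_le_one (by positivity)
          ((div_le_one (by positivity)).2 (by linarith)) (by omega)
    _ ≤ ((2 + s) ^ 2) ^ n * (1 - 4 * s / (2 + s) ^ 2) := by gcongr
    _ ≤ ((2 + s) ^ 2) ^ n * ∏ m, (1 - 4 * v m ^ 2 / (2 + s) ^ 2) := by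
        gcongr
        rw [← sum_eq]
        exact one_sub_sum_le_prod_one_sub _ (fun m _ => by positivity)
          fun m _ => (div_le_one hB).2 (by nlinarith [hv m])
    _ = ∏ m, ((2 + s) ^ 2 - 4 * v m ^ 2) := by
        rw [← Fin.prod_const, ← Finset.prod_mul_distrib]
        exact Finset.prod_congr rfl fun m _ => by field_simp

lemma lap_logSq_nonneg (hd : 2 ≤ d) (a : Site d) : 0 ≤ lap logSq a := by
  have hs := siteSq_nonneg a
  have hpos (m) : 0 < (2 + siteSq a) ^ 2 - 4 * (a m : ℝ) ^ 2 := by nlinarith [sq_le_siteSq a m]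
  have second_difference (m) : logSq (a + unitVec m) + logSq (a - unitVec m) - 2 * logSq a =
      Real.log ((2 + siteSq a) ^ 2 - 4 * (a m : ℝ) ^ 2) - 2 * Real.log (1 + siteSq a) := by
    have hadd := siteSq_nonneg (a + unitVec m)
    have hsub := siteSq_nonneg (a - unitVec m)
    rw [logSq, logSq, logSq, ← Real.log_mul (by positivity) (by positivity), siteSq_add_unitVec,
      siteSq_sub_unitVec]
    ring_nf
  rw [lap, Finset.sum_congr rfl fun m _ => second_difference m, Finset.sum_sub_distrib,
    ← Real.log_prod fun m _ => (hpos m).ne', sub_nonneg]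
  calc ∑ _ : Fin d, 2 * Real.log (1 + siteSq a) = Real.log ((1 + siteSq a) ^ (2 * d)) := by
        rw [Real.log_pow, Finset.sum_const, Finset.card_fin, nsmul_eq_mul]
        push_cast
        ring
    _ ≤ Real.log (∏ m, ((2 + siteSq a) ^ 2 - 4 * (a m : ℝ) ^ 2)) :=
        Real.log_le_log (by positivity) (pow_le_prod_sq_sub hd fun m => (a m : ℝ))

lemma lap_logSq_sub_nonneg (hd : 2 ≤ d) (a c : Site d) : 0 ≤ lap (fun a => logSq (a - c)) a := by
  simpa only [lap, add_sub_right_comm, sub_right_comm] using lap_logSq_nonneg hd (a - c)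

/-- Independent walkers at adjacent sites could jump onto each other along the bond joining them;
this is the bond on which exclusion gains over independence. -/
lemma logSq_bondSwap_sub_ge {p q : Site d} (hpq : p ≠ q) {b : Sym2 (Site d)}
    (hb : b ∈ (lattice d).edgeSet) :
    (logSq (bondSwap b p - q) - logSq (p - q)) + (logSq (bondSwap b q - p) - logSq (q - p)) +
      (if b = s(p, q) then 2 * Real.log 2 else 0) ≤
        logSq (bondSwap b p - bondSwap b q) - logSq (p - q) := by
  by_cases hp : p ∈ b
  · by_cases hq : q ∈ b
    · obtain rfl := (Sym2.mem_and_mem_iff hpq).1 ⟨hp, hq⟩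
      have hlog : logSq (p - q) = Real.log 2 := by
        rw [logSq, mk_mem_edgeSet.1 hb]
        norm_num
      have hzero (a : Site d) : logSq (a - a) = 0 := by simp [logSq, siteSq]
      simp only [if_true, bondSwap_mk, Equiv.swap_apply_left, Equiv.swap_apply_right, hzero,
        logSq_sub_comm q p, hlog]
      linarith
    · rw [if_neg (by rintro rfl; exact hq (Sym2.mem_mk_right p q)), bondSwap_of_notMem hq]
      linarith
  · rw [if_neg (by rintro rfl; exact hp (Sym2.mem_mk_left p q)), bondSwap_of_notMem hp,
      logSq_sub_comm (bondSwap b q) p, logSq_sub_comm q p]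
    linarith

lemma stirGen_logSq_sub_ge (hd : 2 ≤ d) {x : Conf d k} (hx : x ∈ SSet d k) {i j : Fin k}
    (hij : i ≠ j) :
    (if siteSq (x i - x j) = 1 then 2 * Real.log 2 else 0) ≤
      stirGen (fun z => logSq (z i - z j)) x := by
  have hlap_i := lap_logSq_sub_nonneg hd (x i) (x j)
  have hlap_j := lap_logSq_sub_nonneg hd (x j) (x i)
  rw [← sum_bondSwap_sub _ (bondsAt_subset_bondsOf x i) edgeSet_of_mem_bondsOf] at hlap_i
  rw [← sum_bondSwap_sub _ (bondsAt_subset_bondsOf x j) edgeSet_of_mem_bondsOf] at hlap_j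
  have hsum := Finset.sum_le_sum fun b hb =>
    logSq_bondSwap_sub_ge (hx i j hij) (edgeSet_of_mem_bondsOf (x := x) b hb)
  rw [Finset.sum_add_distrib, Finset.sum_add_distrib, Finset.sum_ite_eq'] at hsum
  have mem_iff : s(x i, x j) ∈ bondsOf x ↔ siteSq (x i - x j) = 1 := by
    rw [mem_bondsOf, mk_mem_edgeSet]
    exact and_iff_right ⟨i, Sym2.mem_mk_left _ _⟩
  rw [if_congr mem_iff rfl rfl] at hsum
  exact le_trans (by linarith) hsum

end LogPair

section Penalty

variable {d k : ℕ}

/-- The function `∑ m, (8R|a_m| - a_m²)` penalizing the displacement `a` of one particle. Its radial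
profile is increasing and strictly concave on `|a_m| ≤ 4R`, so independent motion of two walkers
decreases it on average, except at the kink `a_m = 0`. -/
def sitePenalty (R : ℝ) (a : Site d) : ℝ := ∑ m, (8 * R * |(a m : ℝ)| - (a m : ℝ) ^ 2)

/-- The penalty for the displacement between two configurations in the doubling of variables:
`sitePenalty` summed over the particles. -/
def penalty (R : ℝ) (z : Conf d k) : ℝ := ∑ i, sitePenalty R (z i)

lemma sitePenalty_neg (R : ℝ) (a : Site d) : sitePenalty R (-a) = sitePenalty R a := by
  simp [sitePenalty]

lemma sitePenalty_sub_comm (R : ℝ) (a c : Site d) :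
    sitePenalty R (a - c) = sitePenalty R (c - a) := by rw [← sitePenalty_neg, neg_sub]

lemma abs_intCast_second_difference (n : ℤ) :
    |((n + 1 : ℤ) : ℝ)| + |((n - 1 : ℤ) : ℝ)| - 2 * |(n : ℝ)| = if n = 0 then 2 else 0 := by
  rw [← Int.cast_abs, ← Int.cast_abs, ← Int.cast_abs]
  have : |n + 1| + |n - 1| - 2 * |n| = if n = 0 then 2 else 0 := by grind
  exact_mod_cast congrArg (Int.cast : ℤ → ℝ) this

lemma sitePenalty_second_difference (R : ℝ) (a : Site d) (m : Fin d) :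
    sitePenalty R (a + unitVec m) + sitePenalty R (a - unitVec m) - 2 * sitePenalty R a =
      if a m = 0 then 16 * R - 2 else -2 := by
  have only_m : sitePenalty R (a + unitVec m) + sitePenalty R (a - unitVec m) -
      2 * sitePenalty R a = 8 * R * (|((a m + 1 : ℤ) : ℝ)| + |((a m - 1 : ℤ) : ℝ)| -
        2 * |(a m : ℝ)|) - 2 := by
    simp only [sitePenalty, two_mul, ← Finset.sum_add_distrib, ← Finset.sum_sub_distrib]
    rw [Finset.sum_eq_single m (fun j _ hj => by simp [unitVec, hj]) (by simp)]
    simp [unitVec]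
    ring
  rw [only_m, abs_intCast_second_difference]
  split_ifs <;> ring

lemma lap_sitePenalty_sub (R : ℝ) (a c : Site d) : lap (fun a => sitePenalty R (a - c)) a =
    ∑ m, if a m = c m then 16 * R - 2 else -2 := by
  refine Finset.sum_congr rfl fun m _ => ?_
  have := sitePenalty_second_difference R (a - c) m
  simpa only [add_sub_right_comm, sub_right_comm a, Pi.sub_apply, sub_eq_zero] using this

end Penalty

section Coupling

variable {d k : ℕ} {c R : ℝ} {P P' : Conf d k → ℝ} {x x' : Conf d k}

/-- `(x, x')` maximizes the doubled function `P z - P' z' - c * penalty R (z - z')` among the pairs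
of exclusion configurations reached from it when each component is stirred along at most one bond;
such moves change a configuration by at most `2` in `confSq`. -/
def IsDoubledLocalMax (c R : ℝ) (P P' : Conf d k → ℝ) (x x' : Conf d k) : Prop :=
  ∀ z ∈ SSet d k, ∀ z' ∈ SSet d k, confSq (z - x) ≤ 2 → confSq (z' - x') ≤ 2 →
    P z - P' z' - c * penalty R (z - z') ≤ P x - P' x' - c * penalty R (x - x')

lemma IsDoubledLocalMax.stir_sub_stir_le (h : IsDoubledLocalMax c R P P' x x') (hx : x ∈ SSet d k)
    (hx' : x' ∈ SSet d k) {b : Sym2 (Site d)} (hb : b ∈ (lattice d).edgeSet) :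
    (P (stir b x) - P x) - (P' (stir b x') - P' x') ≤
      c * (penalty R (stir b x - stir b x') - penalty R (x - x')) := by
  have := h _ (stir_mem_SSet b hx) _ (stir_mem_SSet b hx') (confSq_stir_sub_self_le hx hb)
    (confSq_stir_sub_self_le hx' hb)
  linarith

lemma IsDoubledLocalMax.stir_sub_le_left (h : IsDoubledLocalMax c R P P' x x') (hx : x ∈ SSet d k)
    (hx' : x' ∈ SSet d k) {b : Sym2 (Site d)} (hb : b ∈ (lattice d).edgeSet) :
    P (stir b x) - P x ≤ c * (penalty R (stir b x - x') - penalty R (x - x')) := by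
  have := h _ (stir_mem_SSet b hx) _ hx' (confSq_stir_sub_self_le hx hb)
    (by simp [confSq_zero])
  linarith

lemma IsDoubledLocalMax.stir_sub_le_right (h : IsDoubledLocalMax c R P P' x x')
    (hx : x ∈ SSet d k) (hx' : x' ∈ SSet d k) {b : Sym2 (Site d)} (hb : b ∈ (lattice d).edgeSet) :
    -(P' (stir b x') - P' x') ≤ c * (penalty R (x - stir b x') - penalty R (x - x')) := by
  have := h _ hx _ (stir_mem_SSet b hx') (by simp [confSq_zero])
    (confSq_stir_sub_self_le hx' hb)
  linarith

/-- The change of the penalty of the pair `a`, `a'` when each of the two walkers uses the bond `b`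
while the other one rests. -/
def independentChange (R : ℝ) (b : Sym2 (Site d)) (a a' : Site d) : ℝ :=
  (sitePenalty R (bondSwap b a - a') - sitePenalty R (a - a')) +
    (sitePenalty R (bondSwap b a' - a) - sitePenalty R (a' - a))

lemma sum_independentChange (R : ℝ) {a a' : Site d} {E : Finset (Sym2 (Site d))}
    (ha : bondsAt a ⊆ E) (ha' : bondsAt a' ⊆ E) (hE : ∀ b ∈ E, b ∈ (lattice d).edgeSet) :
    ∑ b ∈ E, independentChange R b a a' = 2 * ∑ m, if a m = a' m then 16 * R - 2 else -2 := by
  simp only [independentChange, Finset.sum_add_distrib]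
  rw [sum_bondSwap_sub (fun p => sitePenalty R (p - a')) ha hE, lap_sitePenalty_sub,
    sum_bondSwap_sub (fun p => sitePenalty R (p - a)) ha' hE, lap_sitePenalty_sub, two_mul]
  simp only [eq_comm]

lemma sitePenalty_bondSwap_sub_eq_independentChange (R : ℝ) {b : Sym2 (Site d)} {a a' : Site d}
    (h : ¬(a ∈ b ∧ a' ∈ b)) :
    sitePenalty R (bondSwap b a - bondSwap b a') - sitePenalty R (a - a') =
      independentChange R b a a' := by
  rw [independentChange]
  by_cases ha : a ∈ b
  · simp [bondSwap_of_notMem fun ha' => h ⟨ha, ha'⟩]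
  · simp [bondSwap_of_notMem ha, sitePenalty_sub_comm R a]

lemma penalty_stir_sub_stir (R : ℝ) (hx : x ∈ SSet d k) (hx' : x' ∈ SSet d k) {b : Sym2 (Site d)}
    {j : Fin k} (hj : x j = x' j) (hb : x j ∈ b) :
    penalty R (stir b x - stir b x') - penalty R (x - x') =
      ∑ i, if x i = x' i then 0 else independentChange R b (x i) (x' i) := by
  rw [penalty, penalty, ← Finset.sum_sub_distrib]
  refine Finset.sum_congr rfl fun i _ => ?_
  simp only [Pi.sub_apply, stir]
  split_ifs with hi
  · simp [hi]
  · refine sitePenalty_bondSwap_sub_eq_independentChange R fun hmem => ?_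
    rw [(Sym2.mem_and_mem_iff hi).1 hmem, Sym2.mem_iff] at hb
    rcases hb with hb | hb
    · exact hi (mem_SSet_iff_injective.1 hx hb ▸ hj)
    · exact hi (mem_SSet_iff_injective.1 hx' (hj ▸ hb) ▸ hj)

lemma penalty_stir_sub_add_sub_stir (R : ℝ) {b : Sym2 (Site d)} (h : ∀ j, x j = x' j → x j ∉ b) :
    (penalty R (stir b x - x') - penalty R (x - x')) +
        (penalty R (x - stir b x') - penalty R (x - x')) =
      ∑ i, if x i = x' i then 0 else independentChange R b (x i) (x' i) := by
  simp only [penalty, ← Finset.sum_sub_distrib, ← Finset.sum_add_distrib]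
  refine Finset.sum_congr rfl fun i _ => ?_
  simp only [Pi.sub_apply, stir]
  split_ifs with hi
  · simp [← hi, bondSwap_of_notMem (h i hi)]
  · rw [independentChange, sitePenalty_sub_comm R (bondSwap b (x' i)),
      sitePenalty_sub_comm R (x' i)]

/-- A bond touching a particle that both configurations share is used simultaneously by both, every
other bond independently. Particles that already agree then stay together. -/
lemma IsDoubledLocalMax.stirGen_sub_stirGen_le (h : IsDoubledLocalMax c R P P' x x')
    (hx : x ∈ SSet d k) (hx' : x' ∈ SSet d k) :
    stirGen P x - stirGen P' x' ≤
      c * ∑ i, if x i = x' i then 0 else 2 * ∑ m, if x i m = x' i m then 16 * R - 2 else -2 := by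
  set E := bondsOf x ∪ bondsOf x'
  have hE : ∀ b ∈ E, b ∈ (lattice d).edgeSet := fun b hb =>
    (Finset.mem_union.1 hb).elim (edgeSet_of_mem_bondsOf b) (edgeSet_of_mem_bondsOf b)
  have bond_le (b) (hb : b ∈ E) : (P (stir b x) - P x) - (P' (stir b x') - P' x') ≤
      c * ∑ i, if x i = x' i then 0 else independentChange R b (x i) (x' i) := by
    by_cases hshared : ∃ j, x j = x' j ∧ x j ∈ b
    · obtain ⟨j, hj, hjb⟩ := hshared
      rw [← penalty_stir_sub_stir R hx hx' hj hjb]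
      exact h.stir_sub_stir_le hx hx' (hE b hb)
    · push Not at hshared
      rw [← penalty_stir_sub_add_sub_stir R hshared, mul_add, sub_eq_add_neg]
      exact add_le_add (h.stir_sub_le_left hx hx' (hE b hb))
        (h.stir_sub_le_right hx hx' (hE b hb))
  rw [stirGen_eq_sum P Finset.subset_union_left hE, stirGen_eq_sum P' Finset.subset_union_right hE,
    ← Finset.sum_sub_distrib]
  refine (Finset.sum_le_sum bond_le).trans_eq ?_
  rw [← Finset.mul_sum, Finset.sum_comm]
  congr! 2 with i
  split_ifs with hi
  · exact Finset.sum_const_zero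
  · exact sum_independentChange R
      ((bondsAt_subset_bondsOf x i).trans Finset.subset_union_left)
      ((bondsAt_subset_bondsOf x' i).trans Finset.subset_union_right) hE

lemma IsDoubledLocalMax.stirGen_sub_stirGen_le_mul (hc : 0 ≤ c) (hR : 0 ≤ R)
    (h : IsDoubledLocalMax c R P P' x x') (hx : x ∈ SSet d k) (hx' : x' ∈ SSet d k) :
    stirGen P x - stirGen P' x' ≤ 32 * (k * d) * (c * R) := by
  have coord_le (i m) : (if x i m = x' i m then 16 * R - 2 else -2) ≤ 16 * R := by
    split_ifs <;> linarith
  calc stirGen P x - stirGen P' x'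
      ≤ c * ∑ i, if x i = x' i then 0 else 2 * ∑ m, if x i m = x' i m then 16 * R - 2 else -2 :=
        h.stirGen_sub_stirGen_le hx hx'
    _ ≤ c * ∑ _ : Fin k, 2 * ∑ _ : Fin d, 16 * R := by
        gcongr with i
        split_ifs with hi
        · positivity
        · gcongr with m
          exact coord_le i m
    _ = 32 * (k * d) * (c * R) := by
        simp only [Finset.sum_const, Finset.card_fin, nsmul_eq_mul]
        ring

lemma sum_le_single_of_nonpos {ι : Type*} [Fintype ι] {f : ι → ℝ} (hf : ∀ i, f i ≤ 0) (i : ι) :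
    ∑ j, f j ≤ f i := by
  simpa using Finset.single_le_sum (f := -f) (fun j _ => neg_nonneg.2 (hf j)) (Finset.mem_univ i)

lemma IsDoubledLocalMax.stirGen_sub_stirGen_le_of_subsingleton [Subsingleton (Fin d)]
    (hc : 0 ≤ c) (h : IsDoubledLocalMax c R P P' x x') (hx : x ∈ SSet d k) (hx' : x' ∈ SSet d k)
    (hne : x ≠ x') : stirGen P x - stirGen P' x' ≤ -4 * c := by
  obtain ⟨i, hi⟩ := Function.ne_iff.1 hne
  have drift (l) : (if x l = x' l then 0 else
      2 * ∑ m, if x l m = x' l m then 16 * R - 2 else -2) = if x l = x' l then 0 else -4 := by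
    split_ifs with hl
    · rfl
    · obtain ⟨m, hm⟩ := Function.ne_iff.1 hl
      rw [Fintype.sum_subsingleton _ m, if_neg hm]
      norm_num
  have sum_le : ∑ l, (if x l = x' l then (0 : ℝ) else -4) ≤ -4 :=
    (sum_le_single_of_nonpos (fun l => by split_ifs <;> norm_num) i).trans_eq (if_neg hi)
  calc stirGen P x - stirGen P' x' ≤ c * _ := h.stirGen_sub_stirGen_le hx hx'
    _ = c * ∑ l, if x l = x' l then 0 else -4 := by rw [Finset.sum_congr rfl fun l _ => drift l]
    _ ≤ c * -4 := by gcongr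
    _ = -4 * c := mul_comm _ _

/-- No two particles of `x` sit at neighbouring sites, so no exclusion constraint is active. -/
def NoAdjacent (x : Conf d k) : Prop := ∀ i j, i ≠ j → siteSq (x i - x j) ≠ 1

lemma NoAdjacent.stirGen_eq_sum_lap_update (hadj : NoAdjacent x) (hx : x ∈ SSet d k)
    (f : Conf d k → ℝ) :
    stirGen f x = ∑ i, lap (fun a => f (Function.update x i a)) (x i) := by
  have bond_eq (b) (hb : b ∈ bondsOf x) : f (stir b x) - f x =
      ∑ i, (f (Function.update x i (bondSwap b (x i))) - f (Function.update x i (x i))) := by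
    obtain ⟨⟨i, hi⟩, hedge⟩ := mem_bondsOf.1 hb
    have fixed (l) (hl : l ≠ i) : bondSwap b (x l) = x l := by
      refine bondSwap_of_notMem fun hlb => hadj i l hl.symm ?_
      rwa [(Sym2.mem_and_mem_iff (hx i l hl.symm)).1 ⟨hi, hlb⟩, mk_mem_edgeSet] at hedge
    rw [Finset.sum_eq_single i (fun l _ hl => by rw [fixed l hl, sub_self]) (by simp)]
    have stir_eq : stir b x = Function.update x i (bondSwap b (x i)) :=
      Function.eq_update_iff.2 ⟨rfl, fixed⟩
    rw [stir_eq, Function.update_eq_self]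
  rw [stirGen_apply, Finset.sum_congr rfl bond_eq, Finset.sum_comm]
  exact Finset.sum_congr rfl fun i _ =>
    sum_bondSwap_sub (fun a => f (Function.update x i a)) (bondsAt_subset_bondsOf x i)
      edgeSet_of_mem_bondsOf

lemma NoAdjacent.update_mem_SSet (hadj : NoAdjacent x) (hx : x ∈ SSet d k) {i : Fin k} {a : Site d}
    (ha : siteSq (a - x i) ≤ 1) : Function.update x i a ∈ SSet d k := by
  have ne_of_ne {l} (hl : l ≠ i) : a ≠ x l := by
    rintro rfl
    rw [siteSq_eq_natCast, Nat.cast_le_one, Nat.le_one_iff_eq_zero_or_eq_one] at ha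
    rcases ha with h0 | h1
    · refine hx l i hl (sub_eq_zero.1 (siteSq_eq_zero.1 ?_))
      rw [siteSq_eq_natCast, h0, Nat.cast_zero]
    · exact hadj l i hl (by rw [siteSq_eq_natCast, h1, Nat.cast_one])
  intro l l' hll'
  by_cases hl : l = i
  · subst hl
    simpa [hll'.symm] using ne_of_ne hll'.symm
  by_cases hl' : l' = i
  · subst hl'
    simpa [hl] using (ne_of_ne hl).symm
  · simpa [hl, hl'] using hx l l' hll'

lemma penalty_update_sub_update (R : ℝ) (x x' : Conf d k) (i : Fin k) (a a' : Site d) :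
    penalty R (Function.update x i a - Function.update x' i a') =
      penalty R (x - x') + (sitePenalty R (a - a') - sitePenalty R (x i - x' i)) := by
  rw [← sub_eq_iff_eq_add', penalty, penalty, ← Finset.sum_sub_distrib,
    Finset.sum_eq_single i (fun l _ hl => by simp [hl]) (by simp)]
  simp

lemma IsDoubledLocalMax.update_le (h : IsDoubledLocalMax c R P P' x x') (hx : x ∈ SSet d k)
    (hx' : x' ∈ SSet d k) (hadj : NoAdjacent x) (hadj' : NoAdjacent x') (i : Fin k) {a a' : Site d}
    (ha : siteSq (a - x i) ≤ 1) (ha' : siteSq (a' - x' i) ≤ 1) :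
    P (Function.update x i a) - P' (Function.update x' i a') ≤
      P x - P' x' + c * (sitePenalty R (a - a') - sitePenalty R (x i - x' i)) := by
  have := h _ (hadj.update_mem_SSet hx ha) _ (hadj'.update_mem_SSet hx' ha')
    (by rw [confSq_update_sub]; linarith) (by rw [confSq_update_sub]; linarith)
  rw [penalty_update_sub_update] at this
  linarith

/-- Coordinates that agree move together, the others independently. -/
lemma IsDoubledLocalMax.second_difference_sub_le (h : IsDoubledLocalMax c R P P' x x')
    (hx : x ∈ SSet d k) (hx' : x' ∈ SSet d k) (hadj : NoAdjacent x) (hadj' : NoAdjacent x')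
    (i : Fin k) (m : Fin d) :
    (P (Function.update x i (x i + unitVec m)) + P (Function.update x i (x i - unitVec m)) -
        2 * P x) -
      (P' (Function.update x' i (x' i + unitVec m)) + P' (Function.update x' i (x' i - unitVec m)) -
        2 * P' x') ≤ if x i m = x' i m then 0 else -4 * c := by
  have step_add (a : Site d) : siteSq (a + unitVec m - a) ≤ 1 := by
    rw [add_sub_cancel_left, siteSq_unitVec]
  have step_sub (a : Site d) : siteSq (a - unitVec m - a) ≤ 1 := by
    rw [sub_sub_cancel_left, siteSq_neg, siteSq_unitVec]
  have rest (a : Site d) : siteSq (a - a) ≤ 1 := by simp [siteSq]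
  have move {a a'} := h.update_le hx hx' hadj hadj' i (a := a) (a' := a')
  split_ifs with him
  · have both_add := move (step_add (x i)) (step_add (x' i))
    have both_sub := move (step_sub (x i)) (step_sub (x' i))
    rw [add_sub_add_right_eq_sub, sub_self, mul_zero] at both_add
    rw [sub_sub_sub_cancel_right, sub_self, mul_zero] at both_sub
    linarith
  · have left_add := move (step_add (x i)) (rest (x' i))
    have left_sub := move (step_sub (x i)) (rest (x' i))
    have right_add := move (rest (x i)) (step_add (x' i))
    have right_sub := move (rest (x i)) (step_sub (x' i))
    have concave := sitePenalty_second_difference R (x i - x' i) m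
    rw [if_neg (by simpa [sub_eq_zero] using him)] at concave
    rw [Function.update_eq_self, add_sub_right_comm] at left_add
    rw [Function.update_eq_self, sub_right_comm] at left_sub
    rw [Function.update_eq_self, ← sub_sub] at right_add
    rw [Function.update_eq_self, ← sub_add] at right_sub
    linear_combination left_add + left_sub + right_add + right_sub + 2 * c * concave

lemma IsDoubledLocalMax.stirGen_sub_stirGen_le_of_noAdjacent (hc : 0 ≤ c)
    (h : IsDoubledLocalMax c R P P' x x') (hx : x ∈ SSet d k) (hx' : x' ∈ SSet d k)
    (hadj : NoAdjacent x) (hadj' : NoAdjacent x') (hne : x ≠ x') :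
    stirGen P x - stirGen P' x' ≤ -4 * c := by
  obtain ⟨i, hi⟩ := Function.ne_iff.1 hne
  obtain ⟨m, him⟩ := Function.ne_iff.1 hi
  have bound_nonpos (l r) : (if x l r = x' l r then 0 else -4 * c) ≤ 0 := by
    split_ifs <;> linarith
  rw [hadj.stirGen_eq_sum_lap_update hx, hadj'.stirGen_eq_sum_lap_update hx',
    ← Finset.sum_sub_distrib]
  simp only [lap, Function.update_eq_self, ← Finset.sum_sub_distrib]
  calc _ ≤ ∑ l, ∑ r, if x l r = x' l r then 0 else -4 * c :=
        Finset.sum_le_sum fun l _ => Finset.sum_le_sum fun r _ =>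
          h.second_difference_sub_le hx hx' hadj hadj' l r
    _ ≤ ∑ r, if x i r = x' i r then 0 else -4 * c :=
        sum_le_single_of_nonpos (fun l => Finset.sum_nonpos fun r _ => bound_nonpos l r) i
    _ ≤ -4 * c := (sum_le_single_of_nonpos (bound_nonpos i) m).trans_eq (if_neg him)

end Coupling

section Doubling

variable {d k : ℕ} {c R : ℝ} {o : Conf d k} {a : Conf d k → ℝ}

lemma confSq_neg (x : Conf d k) : confSq (-x) = confSq x := by
  simp [confSq, siteSq_neg]

lemma confSq_sub_comm (x z : Conf d k) : confSq (x - z) = confSq (z - x) := by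
  rw [← confSq_neg, neg_sub]

lemma siteSq_add_le (p q : Site d) : siteSq (p + q) ≤ 2 * siteSq p + 2 * siteSq q := by
  simp only [siteSq, Finset.mul_sum, ← Finset.sum_add_distrib, Pi.add_apply, Int.cast_add]
  exact Finset.sum_le_sum fun m _ => by linarith [add_sq_le (a := (p m : ℝ)) (b := q m)]

lemma confSq_add_le (x z : Conf d k) : confSq (x + z) ≤ 2 * confSq x + 2 * confSq z := by
  simp only [confSq, Finset.mul_sum, ← Finset.sum_add_distrib]
  exact Finset.sum_le_sum fun i _ => siteSq_add_le (x i) (z i)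

lemma confSq_sub_le_add (x z o : Conf d k) :
    confSq (x - z) ≤ 2 * confSq (x - o) + 2 * confSq (z - o) := by
  rw [← sub_add_sub_cancel x o z, confSq_sub_comm z o]
  exact confSq_add_le _ _

lemma penalty_nonneg {z : Conf d k} (hR : 0 ≤ R) (hz : confSq z ≤ 64 * R ^ 2) :
    0 ≤ penalty R z := by
  refine Finset.sum_nonneg fun i _ => Finset.sum_nonneg fun m _ => ?_
  have habs : |(z i m : ℝ)| ≤ 8 * R := abs_le_of_sq_le_sq
    (by linarith [sq_le_siteSq (z i) m, siteSq_le_confSq z i]) (by positivity)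
  rw [← sq_abs (z i m : ℝ), sub_nonneg, sq]
  exact mul_le_mul_of_nonneg_right habs (abs_nonneg _)

lemma penalty_le (hR : 0 ≤ R) (z : Conf d k) : penalty R z ≤ 8 * R * confSq z := by
  simp only [penalty, sitePenalty, confSq, siteSq, Finset.mul_sum]
  gcongr with i _ m _
  have habs : |(z i m : ℝ)| ≤ (z i m : ℝ) ^ 2 := by
    rw [← sq_abs, ← Int.cast_abs]
    exact_mod_cast Int.le_self_sq |z i m|
  exact (sub_le_self _ (sq_nonneg _)).trans (by gcongr)

/-- A localizing function for the doubling of variables in the ball of radius `3 * R` around `o`: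
it exceeds `1` away from the ball of radius `R`, and at every doubled maximum within that ball the
doubled generator is less than `-2 / R ^ 2`, enough to absorb a time-dependent term
`2 * (T - t) / R ^ 2`. -/
structure IsBarrier (c R : ℝ) (o : Conf d k) (a : Conf d k → ℝ) : Prop where
  div_le : ∀ x, confSq (x - o) ≤ 9 * R ^ 2 → confSq (x - o) / R ^ 2 ≤ a x
  drift_lt : ∀ x ∈ SSet d k, ∀ x' ∈ SSet d k, x ≠ x' → confSq (x - o) < R ^ 2 →
    confSq (x' - o) < R ^ 2 → ∀ u, IsDoubledLocalMax c R (u - a) (u + a) x x' →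
      stirGen u x - stirGen u x' < -(2 / R ^ 2)

lemma IsBarrier.nonneg (ha : IsBarrier c R o a) {x : Conf d k} (hx : confSq (x - o) ≤ 9 * R ^ 2) :
    0 ≤ a x :=
  (div_nonneg (confSq_nonneg _) (sq_nonneg R)).trans (ha.div_le x hx)

lemma IsBarrier.confSq_sub_lt (ha : IsBarrier c R o a) (hR : 0 < R) {x : Conf d k}
    (hx : confSq (x - o) ≤ 9 * R ^ 2) (hax : a x < 1) : confSq (x - o) < R ^ 2 :=
  (div_lt_one (by positivity)).1 ((ha.div_le x hx).trans_lt hax)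

lemma confSq_sub_le_of_near (hR : 1 ≤ R) {x z : Conf d k} (hx : confSq (x - o) < R ^ 2)
    (hz : confSq (z - x) ≤ 2) : confSq (z - o) ≤ 9 * R ^ 2 := by
  have := confSq_add_le (z - x) (x - o)
  rw [sub_add_sub_cancel] at this
  nlinarith

lemma penalty_sub_nonneg (hR : 0 ≤ R) {x x' : Conf d k} (hx : confSq (x - o) ≤ 9 * R ^ 2)
    (hx' : confSq (x' - o) ≤ 9 * R ^ 2) : 0 ≤ penalty R (x - x') :=
  penalty_nonneg hR (by linarith [confSq_sub_le_add x x' o, sq_nonneg R])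

lemma IsBarrier.stirGen_sub_lt_of_pos_max (ha : IsBarrier c R o a) (hR : 1 ≤ R) (hc : 0 ≤ c)
    {u : Conf d k → ℝ} {x x' : Conf d k} {r : ℝ} (hr : 0 ≤ r) (hx : x ∈ SSet d k)
    (hx' : x' ∈ SSet d k) (hxo : confSq (x - o) ≤ 9 * R ^ 2) (hxo' : confSq (x' - o) ≤ 9 * R ^ 2)
    (hux : u x ≤ 1) (hux' : 0 ≤ u x')
    (hpos : 0 < u x - u x' - (c * penalty R (x - x') + a x + a x' + r))
    (hmax : ∀ z ∈ SSet d k, ∀ z' ∈ SSet d k, confSq (z - o) ≤ 9 * R ^ 2 →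
      confSq (z' - o) ≤ 9 * R ^ 2 → u z - u z' - (c * penalty R (z - z') + a z + a z' + r) ≤
        u x - u x' - (c * penalty R (x - x') + a x + a x' + r)) :
    stirGen u x - stirGen u x' < -(2 / R ^ 2) := by
  have hpen := mul_nonneg hc (penalty_sub_nonneg (zero_le_one.trans hR) hxo hxo')
  have hax := ha.nonneg hxo
  have hax' := ha.nonneg hxo'
  have hxR := ha.confSq_sub_lt (by linarith) hxo (by linarith)
  have hxR' := ha.confSq_sub_lt (by linarith) hxo' (by linarith)
  refine ha.drift_lt x hx x' hx' ?_ hxR hxR' u fun z hz z' hz' hzx hzx' => ?_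
  · rintro rfl
    linarith
  · have := hmax z hz z' hz' (confSq_sub_le_of_near hR hxR hzx) (confSq_sub_le_of_near hR hxR' hzx')
    simp only [Pi.sub_apply, Pi.add_apply]
    linarith

lemma IsBarrier.initial_sub_le (ha : IsBarrier c R o a) (hR : 1 ≤ R) (hc : 0 ≤ c)
    {u : Conf d k → ℝ} {τ : ℝ} (hτ : 0 ≤ τ)
    (hu : ∀ x ∈ SSet d k, confSq (x - o) ≤ 9 * R ^ 2 → u x ∈ Set.Icc 0 1)
    (hinit : R ^ 2 / 2 ≤ τ ∨ ∀ x ∈ SSet d k, confSq (x - o) ≤ 9 * R ^ 2 → u x = 0)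
    {x x' : Conf d k} (hx : x ∈ SSet d k) (hx' : x' ∈ SSet d k)
    (hxo : confSq (x - o) ≤ 9 * R ^ 2) (hxo' : confSq (x' - o) ≤ 9 * R ^ 2) :
    u x - u x' ≤ c * penalty R (x - x') + a x + a x' + 2 * τ / R ^ 2 := by
  have hpen := mul_nonneg hc (penalty_sub_nonneg (zero_le_one.trans hR) hxo hxo')
  have hax := ha.nonneg hxo
  have hax' := ha.nonneg hxo'
  rcases hinit with hlong | hzero
  · have : 1 ≤ 2 * τ / R ^ 2 := (one_le_div (by positivity)).2 (by linarith)
    linarith [(hu x hx hxo).2, (hu x' hx' hxo').1]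
  · rw [hzero x hx hxo, hzero x' hx' hxo', sub_self]
    positivity

lemma IsBarrier.sub_le (ha : IsBarrier c R o a) (hR : 1 ≤ R) (hc : 0 ≤ c) {u : ℝ → Conf d k → ℝ}
    {t₁ T : ℝ} (hT : t₁ ≤ T)
    (hderiv : ∀ x ∈ SSet d k, ∀ t ∈ Set.Icc t₁ T, HasDerivAt (fun s => u s x) (stirGen (u t) x) t)
    (hu : ∀ x ∈ SSet d k, confSq (x - o) ≤ 9 * R ^ 2 → ∀ t ∈ Set.Icc t₁ T, u t x ∈ Set.Icc 0 1)
    (hinit : R ^ 2 / 2 ≤ T - t₁ ∨ ∀ x ∈ SSet d k, confSq (x - o) ≤ 9 * R ^ 2 → u t₁ x = 0)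
    {x x' : Conf d k} (hx : x ∈ SSet d k) (hx' : x' ∈ SSet d k)
    (hxo : confSq (x - o) ≤ 9 * R ^ 2) (hxo' : confSq (x' - o) ≤ 9 * R ^ 2) :
    u T x - u T x' ≤ c * penalty R (x - x') + a x + a x' := by
  set B := {z ∈ (finite_setOf_confSq_sub_le o (9 * R ^ 2)).toFinset | z ∈ SSet d k} with hB
  have mem_B (z : Conf d k) : z ∈ B ↔ confSq (z - o) ≤ 9 * R ^ 2 ∧ z ∈ SSet d k := by simp [hB]
  have doubled_le := nonpos_of_deriv_neg_at_pos_max (F := B ×ˢ B) (t₁ := t₁) (T := T)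
    (f := fun t w => u t w.1 - u t w.2 -
      (c * penalty R (w.1 - w.2) + a w.1 + a w.2 + 2 * (T - t) / R ^ 2))
    (f' := fun t w => stirGen (u t) w.1 - stirGen (u t) w.2 + 2 / R ^ 2) ?_ ?_ ?_
    (x, x') (by simp [*]) T ⟨hT, le_rfl⟩
  · simp only [sub_self, mul_zero, zero_div, add_zero] at doubled_le
    linarith
  all_goals
    rintro ⟨z, z'⟩ hzz'
    obtain ⟨⟨hzo, hz⟩, hzo', hz'⟩ : (_ ∧ _) ∧ _ ∧ _ := by simpa [mem_B] using hzz'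
  · intro t ht
    have htime : HasDerivAt (fun s : ℝ => 2 * (T - s) / R ^ 2) (2 * (-1) / R ^ 2) t :=
      (((hasDerivAt_id t).const_sub T).const_mul 2).div_const _
    refine (((hderiv z hz t ht).sub (hderiv z' hz' t ht)).sub
      (htime.const_add (c * penalty R (z - z') + a z + a z'))).congr_deriv (by ring)
  · exact sub_nonpos.2 (ha.initial_sub_le hR hc (sub_nonneg.2 hT)
      (fun v hv hvo => hu v hv hvo t₁ ⟨le_rfl, hT⟩) hinit hz hz' hzo hzo')
  · intro t ht hpos hmax
    have ht' := Set.Ioc_subset_Icc_self ht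
    have hr : 0 ≤ 2 * (T - t) / R ^ 2 := div_nonneg (by linarith [ht.2]) (sq_nonneg R)
    have := ha.stirGen_sub_lt_of_pos_max hR hc hr hz hz' hzo hzo' (hu z hz hzo t ht').2
      (hu z' hz' hzo' t ht').1 hpos fun v hv v' hv' hvo hvo' => hmax (v, v') (by simp [*])
    simpa only [← sub_neg_eq_add, sub_neg] using this

end Doubling

section Barrier

variable {d k : ℕ} {R : ℝ} {o : Conf d k}

lemma siteSq_add_siteSq_le_confSq (x : Conf d k) {i j : Fin k} (hij : i ≠ j) :
    siteSq (x i) + siteSq (x j) ≤ confSq x := by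
  rw [← Finset.sum_pair (f := fun i => siteSq (x i)) hij]
  exact Finset.sum_le_univ_sum_of_nonneg fun i => siteSq_nonneg (x i)

lemma siteSq_sub_le_of_ne (x z : Conf d k) {i j : Fin k} (hij : i ≠ j) :
    siteSq (x i - x j) ≤ 2 * siteSq (z i - z j) + 4 * confSq (x - z) := by
  have split : x i - x j = (z i - z j) + ((x - z) i + -(x - z) j) := by
    simp only [Pi.sub_apply]
    abel
  have hsum := siteSq_add_le (z i - z j) ((x - z) i + -(x - z) j)
  have hdisp := siteSq_add_le ((x - z) i) (-(x - z) j)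
  rw [siteSq_neg] at hdisp
  rw [split]
  linarith [siteSq_add_siteSq_le_confSq (x - z) hij]

/-- The pairs of particles that can become adjacent in the ball of radius `R` around `o`. -/
def nearPairs (R : ℝ) (o : Conf d k) : Finset (Fin k × Fin k) :=
  {p | p.1 ≠ p.2 ∧ siteSq (o p.1 - o p.2) ≤ 6 * R ^ 2}

/-- The function penalizing the proximity of the pairs in `nearPairs R o`. The constant makes it
nonnegative in the ball of radius `3 * R` around `o`. -/
def crowding (R : ℝ) (o : Conf d k) : Conf d k → ℝ :=
  ∑ p ∈ nearPairs R o, fun z => Real.log (1 + 48 * R ^ 2) - logSq (z p.1 - z p.2)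

lemma crowding_nonneg {z : Conf d k} (hz : confSq (z - o) ≤ 9 * R ^ 2) : 0 ≤ crowding R o z := by
  rw [crowding, Finset.sum_apply]
  refine Finset.sum_nonneg fun p hp => sub_nonneg.2 (Real.log_le_log ?_ ?_)
  · linarith [siteSq_nonneg (z p.1 - z p.2)]
  · obtain ⟨hne, ho⟩ := (Finset.mem_filter_univ p).1 hp
    linarith [siteSq_sub_le_of_ne z o hne]

lemma crowding_le (R : ℝ) (o z : Conf d k) :
    crowding R o z ≤ k ^ 2 * Real.log (1 + 48 * R ^ 2) := by
  have hlog : 0 ≤ Real.log (1 + 48 * R ^ 2) := Real.log_nonneg (by linarith [sq_nonneg R])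
  calc crowding R o z ≤ ∑ _p ∈ nearPairs R o, Real.log (1 + 48 * R ^ 2) := by
        rw [crowding, Finset.sum_apply]
        exact Finset.sum_le_sum fun p _ => sub_le_self _ (logSq_nonneg _)
    _ ≤ ∑ _p : Fin k × Fin k, Real.log (1 + 48 * R ^ 2) :=
        Finset.sum_le_univ_sum_of_nonneg fun _ => hlog
    _ = k ^ 2 * Real.log (1 + 48 * R ^ 2) := by simp [sq]

lemma stirGen_crowding_le (hd : 2 ≤ d) (R : ℝ) (o : Conf d k) {x : Conf d k} (hx : x ∈ SSet d k) :
    stirGen (crowding R o) x ≤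
      -∑ p ∈ nearPairs R o, if siteSq (x p.1 - x p.2) = 1 then 2 * Real.log 2 else 0 := by
  rw [crowding, map_sum, Finset.sum_apply, ← Finset.sum_neg_distrib]
  refine Finset.sum_le_sum fun p hp => ?_
  change stirGen ((fun _ => _) - fun z => logSq (z p.1 - z p.2)) x ≤ _
  rw [map_sub, Pi.sub_apply, stirGen_const, zero_sub]
  exact neg_le_neg (stirGen_logSq_sub_ge hd hx ((Finset.mem_filter_univ p).1 hp).1)

lemma stirGen_crowding_nonpos (hd : 2 ≤ d) (R : ℝ) (o : Conf d k) {x : Conf d k}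
    (hx : x ∈ SSet d k) : stirGen (crowding R o) x ≤ 0 := by
  refine (stirGen_crowding_le hd R o hx).trans (neg_nonpos.2 (Finset.sum_nonneg fun p _ => ?_))
  positivity

lemma stirGen_crowding_le_neg_one (hd : 2 ≤ d) (hR : 1 ≤ R) {x : Conf d k} (hx : x ∈ SSet d k)
    (hxo : confSq (x - o) < R ^ 2) (hadj : ¬NoAdjacent x) : stirGen (crowding R o) x ≤ -1 := by
  unfold NoAdjacent at hadj
  push Not at hadj
  obtain ⟨i, j, hij, hone⟩ := hadj
  have hnear : (i, j) ∈ nearPairs R o := by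
    refine (Finset.mem_filter_univ _).2 ⟨hij, ?_⟩
    have := siteSq_sub_le_of_ne o x hij
    rw [confSq_sub_comm] at this
    nlinarith
  have hpair := Finset.single_le_sum
    (f := fun p : Fin k × Fin k => if siteSq (x p.1 - x p.2) = 1 then 2 * Real.log 2 else 0)
    (fun p _ => by positivity) hnear
  simp only [hone, if_true] at hpair
  linarith [stirGen_crowding_le hd R o hx, Real.log_two_gt_d9]

lemma stirGen_sub_sub_stirGen_add (u a : Conf d k → ℝ) (x x' : Conf d k) :
    stirGen (u - a) x - stirGen (u + a) x' =
      stirGen u x - stirGen u x' - (stirGen a x + stirGen a x') := by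
  simp only [map_sub, map_add, Pi.sub_apply, Pi.add_apply]
  ring

lemma stirGen_smul_confSq_sub (α : ℝ) (o x : Conf d k) :
    stirGen (α • fun z => confSq (z - o)) x = α * (2 * k * d) := by
  rw [map_smul, Pi.smul_apply, stirGen_confSq_sub, smul_eq_mul]

lemma isBarrier_of_subsingleton [Subsingleton (Fin d)] (hR : 0 < R) (o : Conf d k) :
    IsBarrier ((k * d + 1) / R ^ 2) R o ((1 / R ^ 2) • fun z => confSq (z - o)) where
  div_le x _ := by simp [div_eq_inv_mul]
  drift_lt x hx x' hx' hne _ _ u hmax := by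
    have hdrift := hmax.stirGen_sub_stirGen_le_of_subsingleton (by positivity) hx hx' hne
    rw [stirGen_sub_sub_stirGen_add, stirGen_smul_confSq_sub, stirGen_smul_confSq_sub] at hdrift
    have hpos : 0 < 2 / R ^ 2 := by positivity
    linear_combination hdrift + hpos

/-- The weight of `crowding` that outweighs the drift of independently moving adjacent particles. -/
def crowdingWeight (d k : ℕ) : ℝ := 32 * (k * d) * (k * d + 1) + 4 * (k * d) + 3

/-- The barrier around `o` in dimension at least two. -/
def crowdingBarrier (R : ℝ) (o : Conf d k) : Conf d k → ℝ :=
  (1 / R ^ 2) • (fun z => confSq (z - o)) + (crowdingWeight d k / R) • crowding R o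

lemma crowdingWeight_nonneg (d k : ℕ) : 0 ≤ crowdingWeight d k := by
  unfold crowdingWeight
  positivity

lemma crowdingBarrier_apply (R : ℝ) (o x : Conf d k) : crowdingBarrier R o x =
    confSq (x - o) / R ^ 2 + crowdingWeight d k / R * crowding R o x := by
  simp [crowdingBarrier, div_eq_inv_mul]

lemma stirGen_crowdingBarrier (R : ℝ) (o x : Conf d k) : stirGen (crowdingBarrier R o) x =
    1 / R ^ 2 * (2 * k * d) + crowdingWeight d k / R * stirGen (crowding R o) x := by
  rw [crowdingBarrier, map_add, Pi.add_apply, stirGen_smul_confSq_sub, map_smul, Pi.smul_apply,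
    smul_eq_mul]

lemma IsDoubledLocalMax.stirGen_sub_lt_of_noAdjacent {u : Conf d k → ℝ} {x x' : Conf d k}
    (hd : 2 ≤ d) (hR : 0 < R) (h : IsDoubledLocalMax ((k * d + 1) / R ^ 2) R
      (u - crowdingBarrier R o) (u + crowdingBarrier R o) x x')
    (hx : x ∈ SSet d k) (hx' : x' ∈ SSet d k) (hne : x ≠ x') (hadj : NoAdjacent x)
    (hadj' : NoAdjacent x') : stirGen u x - stirGen u x' < -(2 / R ^ 2) := by
  have hdrift := h.stirGen_sub_stirGen_le_of_noAdjacent (by positivity) hx hx' hadj hadj' hne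
  rw [stirGen_sub_sub_stirGen_add, stirGen_crowdingBarrier, stirGen_crowdingBarrier] at hdrift
  have hweight := div_nonneg (crowdingWeight_nonneg d k) hR.le
  have hcrowd := add_nonpos (stirGen_crowding_nonpos hd R o hx) (stirGen_crowding_nonpos hd R o hx')
  have hpos : 0 < 2 / R ^ 2 := by positivity
  linear_combination hdrift + hpos + crowdingWeight d k / R * hcrowd

lemma IsDoubledLocalMax.stirGen_sub_lt_of_crowding_le {u : Conf d k → ℝ} {x x' : Conf d k}
    (hR : 1 ≤ R) (h : IsDoubledLocalMax ((k * d + 1) / R ^ 2) R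
      (u - crowdingBarrier R o) (u + crowdingBarrier R o) x x')
    (hx : x ∈ SSet d k) (hx' : x' ∈ SSet d k)
    (hcrowd : stirGen (crowding R o) x + stirGen (crowding R o) x' ≤ -1) :
    stirGen u x - stirGen u x' < -(2 / R ^ 2) := by
  have hR0 : 0 < R := by linarith
  have hdrift := h.stirGen_sub_stirGen_le_mul (by positivity) hR0.le hx hx'
  rw [stirGen_sub_sub_stirGen_add, stirGen_crowdingBarrier, stirGen_crowdingBarrier] at hdrift
  have hweight := div_nonneg (crowdingWeight_nonneg d k) hR0.le
  have hlt : (4 * (k * d) + 2) * (1 / R ^ 2) < (4 * ((k : ℝ) * d) + 3) * (1 / R) := by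
    calc (4 * (k * d) + 2) * (1 / R ^ 2) ≤ (4 * ((k : ℝ) * d) + 2) * (1 / R) := by
          gcongr
          exact le_self_pow₀ hR two_ne_zero
      _ < (4 * (k * d) + 3) * (1 / R) := by
          gcongr
          norm_num
  have hcancel : 32 * (k * d) * ((k * d + 1) / R ^ 2 * R) =
      32 * (k * d) * (k * d + 1) * (1 / R) := by field_simp
  rw [crowdingWeight] at *
  linear_combination hdrift + hlt + hcancel +
    (32 * (k * d) * (k * d + 1) + 4 * (k * d) + 3) / R * hcrowd

lemma isBarrier_crowdingBarrier (hd : 2 ≤ d) (hR : 1 ≤ R) (o : Conf d k) :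
    IsBarrier ((k * d + 1) / R ^ 2) R o (crowdingBarrier R o) where
  div_le x hx := by
    rw [crowdingBarrier_apply]
    exact le_add_of_nonneg_right (mul_nonneg
      (div_nonneg (crowdingWeight_nonneg d k) (by linarith)) (crowding_nonneg hx))
  drift_lt x hx x' hx' hne hxo hxo' u hmax := by
    by_cases hadj : NoAdjacent x ∧ NoAdjacent x'
    · exact hmax.stirGen_sub_lt_of_noAdjacent hd (by linarith) hx hx' hne hadj.1 hadj.2
    refine hmax.stirGen_sub_lt_of_crowding_le hR hx hx' ?_
    rcases not_and_or.1 hadj with hadj | hadj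
    · linarith [stirGen_crowding_le_neg_one hd hR hx hxo hadj, stirGen_crowding_nonpos hd R o hx']
    · linarith [stirGen_crowding_le_neg_one hd hR hx' hxo' hadj, stirGen_crowding_nonpos hd R o hx]

lemma exists_isBarrier_le (d k : ℕ) : ∃ K : ℝ, 0 ≤ K ∧ ∀ R : ℝ, 1 ≤ R → ∀ o : Conf d k,
    ∃ a, IsBarrier ((k * d + 1) / R ^ 2) R o a ∧
      ∀ x, a x ≤ confSq (x - o) / R ^ 2 + K * Real.log (1 + 48 * R ^ 2) / R := by
  obtain hd | hd := Nat.lt_or_ge 1 d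
  · have hK := crowdingWeight_nonneg d k
    refine ⟨crowdingWeight d k * k ^ 2, by positivity, fun R hR o =>
      ⟨_, isBarrier_crowdingBarrier hd hR o, fun x => ?_⟩⟩
    calc crowdingBarrier R o x
        = confSq (x - o) / R ^ 2 + crowdingWeight d k / R * crowding R o x :=
          crowdingBarrier_apply R o x
      _ ≤ confSq (x - o) / R ^ 2 +
            crowdingWeight d k / R * (k ^ 2 * Real.log (1 + 48 * R ^ 2)) := by
          gcongr
          exact crowding_le R o x
      _ = _ := by ring
  · have := Fin.subsingleton_iff_le_one.2 hd
    exact ⟨0, le_rfl, fun R hR o =>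
      ⟨_, isBarrier_of_subsingleton (by linarith) o, fun x => by simp [div_eq_inv_mul]⟩⟩

end Barrier

section GradientBound

variable {d k : ℕ} {R t : ℝ} {o y : Conf d k}

-- For large `t` the comparison starts a diffusive time before `t`; for small `t` it starts at time
-- `0`, where the kernel vanishes near `o` because `y` is far from `o`.
lemma exists_start_time (hR : 1 ≤ R) (ht : 0 ≤ t) (hfar : 100 * R ^ 2 ≤ 1 + t + confSq (o - y)) :
    ∃ t₁ ∈ Set.Icc 0 t, (∀ z : Conf d k, confSq (z - o) ≤ 9 * R ^ 2 → ∀ s ∈ Set.Icc t₁ t,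
        R ^ 2 / 4 ≤ 1 + s + confSq (z - y)) ∧
      (R ^ 2 / 2 ≤ t - t₁ ∨ ∀ z : Conf d k, confSq (z - o) ≤ 9 * R ^ 2 → ptl t₁ z y = 0) := by
  have hR2 : 1 ≤ R ^ 2 := one_le_pow₀ hR
  obtain hlong | hshort := le_or_gt (R ^ 2) t
  · refine ⟨t - R ^ 2 / 2, ⟨by linarith, by linarith⟩, fun z _ s hs => ?_, Or.inl (by simp)⟩
    linarith [hs.1, confSq_nonneg (z - y)]
  · have hzy {z : Conf d k} (hz : confSq (z - o) ≤ 9 * R ^ 2) : 40 * R ^ 2 ≤ confSq (z - y) := by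
      have := confSq_sub_le_add o y z
      rw [confSq_sub_comm o z, confSq_sub_comm y z] at this
      linarith
    refine ⟨0, ⟨le_rfl, ht⟩, fun z hz s hs => by linarith [hs.1, hzy hz], Or.inr fun z hz => ?_⟩
    rw [ptl_zero, deltaFn, if_neg]
    rintro rfl
    have := hzy hz
    rw [sub_self, confSq_zero] at this
    linarith

lemma exists_ptl_le_div_pow (d k : ℕ) : ∃ C > 0, ∀ R : ℝ, 1 ≤ R → ∀ x ∈ SSet d k, ∀ y t, 0 ≤ t →
    R ^ 2 / 4 ≤ 1 + t + confSq (x - y) → ptl t x y ≤ C / R ^ (k * d) := by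
  obtain ⟨C, hC, hptl⟩ := exists_ptl_le_div_sqrt_add_confSq_pow d k
  refine ⟨C * 2 ^ (k * d), by positivity, fun R hR x hx y t ht hfar => ?_⟩
  calc ptl t x y ≤ C / √(1 + t + confSq (x - y)) ^ (k * d) := hptl x hx y t ht
    _ ≤ C / (R / 2) ^ (k * d) := by
        gcongr
        exact Real.le_sqrt_of_sq_le (by linarith)
    _ = C * 2 ^ (k * d) / R ^ (k * d) := by rw [div_pow, div_div_eq_mul_div]

lemma exists_ptl_sub_le_of_isBarrier (d k : ℕ) : ∃ C > 0, ∀ R : ℝ, 1 ≤ R →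
    ∀ (o y : Conf d k) (t : ℝ), 0 ≤ t → 100 * R ^ 2 ≤ 1 + t + confSq (o - y) →
    ∀ c a, 0 ≤ c → IsBarrier c R o a → ∀ x ∈ SSet d k, ∀ x' ∈ SSet d k,
      confSq (x - o) ≤ 9 * R ^ 2 → confSq (x' - o) ≤ 9 * R ^ 2 →
      ptl t x y - ptl t x' y ≤ C / R ^ (k * d) * (c * penalty R (x - x') + a x + a x') := by
  obtain ⟨C, hC, hptl⟩ := exists_ptl_le_div_pow d k
  refine ⟨C, hC, fun R hR o y t ht hfar c a hc ha x hx x' hx' hxo hxo' => ?_⟩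
  obtain ⟨t₁, ⟨ht₁, ht₁t⟩, hball, hinit⟩ := exists_start_time hR ht hfar
  have hM : 0 < C / R ^ (k * d) := by positivity
  have hcompare := ha.sub_le hR hc ht₁t (u := fun s => (C / R ^ (k * d))⁻¹ • fun z => ptl s z y)
    ?_ ?_ ?_ hx hx' hxo hxo'
  · simpa only [Pi.smul_apply, smul_eq_mul, ← mul_sub, inv_mul_le_iff₀ hM] using hcompare
  · intro z hz s _
    rw [map_smul]
    exact (hasDerivAt_ptl hz y s).const_mul _
  · intro z hz hzo s hs
    have hs0 := ht₁.trans hs.1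
    exact ⟨mul_nonneg (inv_pos.2 hM).le (ptl_nonneg hz y hs0),
      inv_mul_le_one_of_le₀ (hptl R hR z hz y s hs0 (hball z hzo s hs)) hM.le⟩
  · exact hinit.imp_right fun hzero z _ hzo => by simp [hzero z hzo]

lemma exists_isBarrier_cost_le (d k : ℕ) : ∃ K > 0, ∀ R : ℝ, 1 ≤ R → ∀ x x' : Conf d k,
    confSq (x' - x) = 1 → ∃ c a, 0 ≤ c ∧ IsBarrier c R x a ∧ ∀ z : Conf d k, confSq z = 1 →
      c * penalty R z + a x + a x' ≤ K * (1 + Real.log (1 + 48 * R ^ 2)) / R := by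
  obtain ⟨K, hK, hbarrier⟩ := exists_isBarrier_le d k
  refine ⟨8 * (k * d + 1) + 1 + 2 * K, by positivity, fun R hR x x' hone => ?_⟩
  obtain ⟨a, ha, hale⟩ := hbarrier R hR x
  have hR0 : 0 < R := by linarith
  have hlog : 0 ≤ Real.log (1 + 48 * R ^ 2) := Real.log_nonneg (by linarith [sq_nonneg R])
  have hax : a x ≤ K * Real.log (1 + 48 * R ^ 2) / R := by simpa [confSq_zero] using hale x
  have hax' : a x' ≤ 1 / R + K * Real.log (1 + 48 * R ^ 2) / R := by
    refine (hale x').trans ?_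
    rw [hone]
    gcongr
    exact le_self_pow₀ hR two_ne_zero
  refine ⟨_, a, by positivity, ha, fun z hz => ?_⟩
  have hpen : penalty R z ≤ 8 * R := by simpa [hz] using penalty_le hR0.le z
  calc (k * d + 1) / R ^ 2 * penalty R z + a x + a x'
      ≤ (k * d + 1) / R ^ 2 * (8 * R) + K * Real.log (1 + 48 * R ^ 2) / R +
          (1 / R + K * Real.log (1 + 48 * R ^ 2) / R) := by gcongr
    _ = (8 * (k * d + 1) + 1 + 2 * K * Real.log (1 + 48 * R ^ 2)) / R := by
        field_simp
        ring
    _ ≤ _ := by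
        gcongr
        linarith [mul_nonneg (by positivity : (0 : ℝ) ≤ 8 * (k * d + 1) + 1) hlog]

lemma exists_abs_ptl_sub_le_of_far (d k : ℕ) : ∃ C > 0, ∀ R : ℝ, 1 ≤ R →
    ∀ x ∈ SSet d k, ∀ x' ∈ SSet d k, confSq (x' - x) = 1 → ∀ y t, 0 ≤ t →
      100 * R ^ 2 ≤ 1 + t + confSq (x - y) →
      |ptl t x y - ptl t x' y| ≤ C * (1 + Real.log (1 + 48 * R ^ 2)) / R ^ (k * d + 1) := by
  obtain ⟨C, hC, hptl⟩ := exists_ptl_sub_le_of_isBarrier d k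
  obtain ⟨K, hK, hbarrier⟩ := exists_isBarrier_cost_le d k
  refine ⟨C * K, by positivity, fun R hR x hx x' hx' hone y t ht hfar => ?_⟩
  obtain ⟨c, a, hc, ha, hcost⟩ := hbarrier R hR x x' hone
  have hxo : confSq (x - x) ≤ 9 * R ^ 2 := by
    rw [sub_self, confSq_zero]
    positivity
  have hxo' : confSq (x' - x) ≤ 9 * R ^ 2 := by nlinarith
  have hprod : C * K * (1 + Real.log (1 + 48 * R ^ 2)) / R ^ (k * d + 1) =
      C / R ^ (k * d) * (K * (1 + Real.log (1 + 48 * R ^ 2)) / R) := by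
    rw [div_mul_div_comm, ← mul_assoc, pow_succ R (k * d)]
  rw [hprod, abs_sub_le_iff]
  constructor
  · refine (hptl R hR x y t ht hfar c a hc ha x hx x' hx' hxo hxo').trans ?_
    gcongr
    exact hcost _ (by rw [confSq_sub_comm, hone])
  · refine (hptl R hR x y t ht hfar c a hc ha x' hx' x hx hxo' hxo).trans ?_
    rw [add_right_comm]
    gcongr
    exact hcost _ hone

lemma sq_sqrt_add_cnorm_add_one_le (ht : 0 ≤ t) (z : Conf d k) :
    (√t + cnorm z + 1) ^ 2 ≤ 3 * (1 + t + confSq z) := by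
  rw [cnorm_eq_sqrt_confSq]
  nlinarith [Real.sq_sqrt ht, Real.sq_sqrt (confSq_nonneg z), sq_nonneg (√t - √(confSq z)),
    sq_nonneg (√t - 1), sq_nonneg (√(confSq z) - 1)]

lemma exists_abs_ptl_sub_le (d k : ℕ) : ∃ C > 0, ∀ x ∈ SSet d k, ∀ x' ∈ SSet d k, ∀ y t, 0 ≤ t →
    |ptl t x y - ptl t x' y| ≤ C := by
  obtain ⟨C, hC, hptl⟩ := exists_ptl_le_div_pow d k
  have ptl_le {x y : Conf d k} {t : ℝ} (hx : x ∈ SSet d k) (ht : 0 ≤ t) : ptl t x y ≤ C := by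
    simpa using hptl 1 le_rfl x hx y t ht (by linarith [confSq_nonneg (x - y)])
  exact ⟨C, hC, fun x hx x' hx' y t ht => abs_sub_le_of_nonneg_of_le (ptl_nonneg hx y ht)
    (ptl_le hx ht) (ptl_nonneg hx' y ht) (ptl_le hx' ht)⟩

lemma exists_abs_ptl_sub_le_log (d k : ℕ) : ∃ C > 0, ∀ x ∈ SSet d k, ∀ x' ∈ SSet d k,
    cnorm (x' - x) = 1 → ∀ y t, 0 ≤ t → |ptl t x y - ptl t x' y| ≤
      C * (1 + Real.log (√t + cnorm (x - y) + 1)) / (√t + cnorm (x - y) + 1) ^ (k * d + 1) := by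
  obtain ⟨C, hC, hfar⟩ := exists_abs_ptl_sub_le_of_far d k
  obtain ⟨C', hC', hnear⟩ := exists_abs_ptl_sub_le d k
  refine ⟨(2 * C + C') * 20 ^ (k * d + 1), by positivity, fun x hx x' hx' hone y t ht => ?_⟩
  have hsq := sq_sqrt_add_cnorm_add_one_le ht (x - y)
  set D := √t + cnorm (x - y) + 1
  have hD : 1 ≤ D := le_add_of_nonneg_left (add_nonneg (Real.sqrt_nonneg _) (Real.sqrt_nonneg _))
  have hlog : 0 ≤ Real.log D := Real.log_nonneg hD
  rw [mul_right_comm, mul_div_assoc, ← div_pow]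
  obtain hD20 | hD20 := le_or_gt 20 D
  · have hlogR : Real.log (1 + 48 * (D / 20) ^ 2) ≤ 2 * Real.log D := by
      rw [two_mul, ← Real.log_mul (by positivity) (by positivity)]
      exact Real.log_le_log (by positivity) (by nlinarith)
    calc |ptl t x y - ptl t x' y|
        ≤ C * (1 + Real.log (1 + 48 * (D / 20) ^ 2)) / (D / 20) ^ (k * d + 1) :=
          hfar (D / 20) (by linarith) x hx x' hx' (cnorm_eq_one_iff.1 hone) y t ht (by nlinarith)
      _ = C * (1 + Real.log (1 + 48 * (D / 20) ^ 2)) * (20 / D) ^ (k * d + 1) := by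
          rw [div_eq_mul_inv, ← inv_pow, inv_div]
      _ ≤ _ := mul_le_mul_of_nonneg_right (by nlinarith) (by positivity)
  · calc |ptl t x y - ptl t x' y| ≤ C' := hnear x hx x' hx' y t ht
      _ ≤ (2 * C + C') * (1 + Real.log D) := by nlinarith
      _ ≤ _ := le_mul_of_one_le_right (by positivity)
          (one_le_pow₀ ((one_le_div (by linarith)).2 hD20.le))

lemma one_add_log_le_rpow {ε D : ℝ} (hε : 0 < ε) (hD : 1 ≤ D) :
    1 + Real.log D ≤ (1 + 1 / ε) * D ^ ε := by
  have hlog := Real.log_le_rpow_div (zero_le_one.trans hD) hε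
  have hone := Real.one_le_rpow hD hε.le
  linear_combination hlog + hone

theorem gradient_bound_full_space_general (d k : ℕ) {θ : ℝ} (hθ : θ < 1) :
    ∃ C : ℝ, 0 < C ∧ ∀ x x' y : Conf d k, x ∈ SSet d k → x' ∈ SSet d k → cnorm (x' - x) = 1 →
      ∀ t : ℝ, 0 ≤ t → |ptl t x y - ptl t x' y| ≤
        C * (√t + cnorm (x - y) + 1) ^ (-(((k * d : ℕ) : ℝ) + θ)) := by
  obtain ⟨C, hC, hlog⟩ := exists_abs_ptl_sub_le_log d k
  have hε : 0 < 1 - θ := sub_pos.2 hθ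
  refine ⟨C * (1 + 1 / (1 - θ)), by positivity, fun x x' y hx hx' hone t ht =>
    (hlog x hx x' hx' hone y t ht).trans ?_⟩
  set D := √t + cnorm (x - y) + 1
  have hD : 1 ≤ D := le_add_of_nonneg_left (add_nonneg (Real.sqrt_nonneg _) (Real.sqrt_nonneg _))
  have hexp : -(((k * d : ℕ) : ℝ) + θ) = (1 - θ) - ((k * d + 1 : ℕ) : ℝ) := by
    push_cast
    ring
  rw [hexp, Real.rpow_sub (by linarith), Real.rpow_natCast, ← mul_div_assoc, mul_assoc C]
  gcongr
  exact one_add_log_le_rpow hε hD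

lemma cnorm_e11 (hd : 1 ≤ d) (hk : 1 ≤ k) : cnorm (e11 d k) = 1 := by
  obtain ⟨d, rfl⟩ := Nat.exists_eq_add_of_le' hd
  obtain ⟨k, rfl⟩ := Nat.exists_eq_add_of_le' hk
  simp [cnorm, e11, ite_and]

end GradientBound

/-- Theorem (main gradient bound on `ℤ^d`): for integers `d, k ≥ 1` and `θ ∈ (0,1)` there is
a constant `C = C(θ,k,d)` such that for all `x, y ∈ 𝕊^k` with `x + e₁₁ ∈ 𝕊^k` and all `t ≥ 0`,
`|p_t^ℓ(x,y) − p_t^ℓ(x+e₁₁,y)| ≤ C (√t + ‖x−y‖ + 1)^{−(kd+θ)}`. -/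
theorem gradient_bound_full_space (d k : ℕ) (hd : 1 ≤ d) (hk : 1 ≤ k)
    (θ : ℝ) (hθ : θ ∈ Set.Ioo (0 : ℝ) 1) :
    ∃ C : ℝ, 0 < C ∧ ∀ x y : Conf d k, x ∈ SSet d k → y ∈ SSet d k →
      x + e11 d k ∈ SSet d k → ∀ t : ℝ, 0 ≤ t →
      |ptl t x y - ptl t (x + e11 d k) y| ≤
        C * (Real.sqrt t + cnorm (x - y) + 1) ^ (-(((k * d : ℕ) : ℝ) + θ)) := by
  obtain ⟨C, hC, hbound⟩ := gradient_bound_full_space_general d k hθ.2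
  exact ⟨C, hC, fun x y hx _ hx' t ht =>
    hbound x _ y hx hx' (by rw [add_sub_cancel_left, cnorm_e11 hd hk]) t ht⟩

end SSEPPaper
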